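/- arXiv:0811.1290 — 2 statements merged into one kernel-verified Lean document; each statement's English description precedes it below -/
import Mathlib

section
/- Let β be a real Schur root of Q. Then there are finitely many quiver exceptional sets 𝓔_1,…,𝓔_m, each of cardinality at most |Q_0|−1, such that D(β) = ⋃_{1≤i≤m} Cone(𝓔_i). -/
set_option autoImplicit false

noncomputable section

open scoped BigOperators

/-! Basic setup for representations of a quiver with vertex set `V`, arrow set `A`,
tail map `t` and head map `h`, over a field `K`. -/

variable (K : Type) [Field K]
variable {V A : Type} [Fintype V] [DecidableEq V] [Fintype A]

/-- The Euler form of the quiver `(V, A, t, h)`. -/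
def eulerForm {R : Type} [CommRing R] (t h : A → V) (x y : V → R) : R :=
  ∑ i, x i * y i - ∑ a, x (t a) * y (h a)

def natZ (x : V → ℕ) : V → ℤ := fun i => (x i : ℤ)
def intQ (x : V → ℤ) : V → ℚ := fun i => (x i : ℚ)
def natQ (x : V → ℕ) : V → ℚ := fun i => (x i : ℚ)

/-- The weight `⟨α,·⟩`. -/
def weightL (t h : A → V) (α : V → ℤ) : V → ℤ :=
  fun i => eulerForm t h α (fun j => if j = i then 1 else 0)

/-- The weight `−⟨·,α⟩`. -/
def weightR (t h : A → V) (α : V → ℤ) : V → ℤ :=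
  fun i => - eulerForm t h (fun j => if j = i then 1 else 0) α

/-- `IsPathFrom t h i p j` : the list of arrows `p` is a path from `i` to `j`. -/
def IsPathFrom (t h : A → V) : V → List A → V → Prop
  | i, [], j => i = j
  | i, a :: p, j => t a = i ∧ IsPathFrom t h (h a) p j

/-- The quiver has no (nontrivial) oriented cycles. -/
def Acyclic (t h : A → V) : Prop := ∀ (i : V) (p : List A), IsPathFrom t h i p i → p = []

/-- The dimension vector `γ_i` of the projective indecomposable at `i`:
`γ_i(j)` is the number of paths from `i` to `j`. -/
def gammaRoot (t h : A → V) (i : V) : V → ℕ :=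
  fun j => Set.ncard {p : List A | IsPathFrom t h i p j}

/-- A finite-dimensional representation of the quiver `(V, A, t, h)` over `K`. -/
structure QuivRep (K : Type) [Field K] (V A : Type) (t h : A → V) : Type 1 where
  sp : V → Type
  [inst1 : ∀ i, AddCommGroup (sp i)]
  [inst2 : ∀ i, Module K (sp i)]
  [inst3 : ∀ i, FiniteDimensional K (sp i)]
  map : ∀ a : A, sp (t a) →ₗ[K] sp (h a)

attribute [instance] QuivRep.inst1 QuivRep.inst2 QuivRep.inst3

namespace QuivRep

variable {K} {t h : A → V}

/-- The dimension vector of a representation. -/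
def dimVec (X : QuivRep K V A t h) : V → ℕ := fun i => Module.finrank K (X.sp i)

/-- A subrepresentation. -/
structure Sub (X : QuivRep K V A t h) where
  sub : ∀ i, Submodule K (X.sp i)
  le : ∀ a : A, ∀ x ∈ sub (t a), X.map a x ∈ sub (h a)

/-- The dimension vector of a subrepresentation. -/
def Sub.dimVec {X : QuivRep K V A t h} (U : Sub X) : V → ℕ :=
  fun i => Module.finrank K (U.sub i)

/-- The space `Hom_Q(X,Y)` of morphisms of representations, as a submodule of
`Π i, Hom_K(X(i),Y(i))`. -/
def homS (X Y : QuivRep K V A t h) : Submodule K (∀ i, X.sp i →ₗ[K] Y.sp i) where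
  carrier := {φ | ∀ a : A, (φ (h a)).comp (X.map a) = (Y.map a).comp (φ (t a))}
  zero_mem' := by intro a; simp
  add_mem' := by
    intro f g hf hg a
    simp only [Pi.add_apply, LinearMap.add_comp, LinearMap.comp_add, hf a, hg a]
  smul_mem' := by
    intro c f hf a
    simp only [Pi.smul_apply, LinearMap.smul_comp, LinearMap.comp_smul, hf a]

/-- The dimension of `Hom_Q(X,Y)`. -/
def homDim (X Y : QuivRep K V A t h) : ℕ := Module.finrank K (homS X Y)

/-- The map `d^X_Y` from Ringel's canonical exact sequence. -/
def dmap (X Y : QuivRep K V A t h) :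
    (∀ i, X.sp i →ₗ[K] Y.sp i) →ₗ[K] (∀ a : A, X.sp (t a) →ₗ[K] Y.sp (h a)) where
  toFun φ := fun a => (φ (h a)).comp (X.map a) - (Y.map a).comp (φ (t a))
  map_add' f g := by
    funext a
    simp only [Pi.add_apply, LinearMap.add_comp, LinearMap.comp_add]
    abel
  map_smul' c f := by
    funext a
    simp only [Pi.smul_apply, LinearMap.smul_comp, LinearMap.comp_smul, smul_sub,
      RingHom.id_apply]

/-- The dimension of `Ext^1_Q(X,Y)`, i.e. of the cokernel of `d^X_Y`. -/
def extDim (X Y : QuivRep K V A t h) : ℕ :=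
  Module.finrank K ((∀ a : A, X.sp (t a) →ₗ[K] Y.sp (h a)) ⧸ LinearMap.range (dmap X Y))

/-- A rigid representation: `Ext^1_Q(X,X) = 0`. -/
def IsRigid (X : QuivRep K V A t h) : Prop := extDim X X = 0

/-- A Schur representation: `End_Q(X) = K·id`. -/
def IsSchur (X : QuivRep K V A t h) : Prop := homDim X X = 1

/-- An exceptional representation: rigid and Schur. -/
def IsExceptional (X : QuivRep K V A t h) : Prop := IsRigid X ∧ IsSchur X

end QuivRep

/-- `β` is a real Schur root: the dimension vector of an exceptional representation. -/
def isRealSchurRoot (t h : A → V) (β : V → ℕ) : Prop :=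
  ∃ X : QuivRep K V A t h, X.dimVec = β ∧ X.IsExceptional

/-- `ext_Q(α,β)` : the generic (minimal) value of `dim Ext^1_Q` on pairs of
representations of dimension vectors `α`, `β`. -/
def extMin (t h : A → V) (α β : V → ℕ) : ℕ :=
  sInf {n | ∃ X Y : QuivRep K V A t h, X.dimVec = α ∧ Y.dimVec = β ∧ QuivRep.extDim X Y = n}

/-- `hom_Q(α,β)` : the generic (minimal) value of `dim Hom_Q`. -/
def homMin (t h : A → V) (α β : V → ℕ) : ℕ :=
  sInf {n | ∃ X Y : QuivRep K V A t h, X.dimVec = α ∧ Y.dimVec = β ∧ QuivRep.homDim X Y = n}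

/-- `β' ↪ β` : every representation of dimension vector `β` has a subrepresentation of
dimension vector `β'`. -/
def Embeds (t h : A → V) (β' β : V → ℕ) : Prop :=
  ∀ X : QuivRep K V A t h, X.dimVec = β → ∃ U : QuivRep.Sub X, U.dimVec = β'

/-- `σ`-semi-stability of a representation. -/
def IsSemistable {t h : A → V} (σ : V → ℤ) (X : QuivRep K V A t h) : Prop :=
  (∑ i, σ i * (X.dimVec i : ℤ)) = 0 ∧
  ∀ U : QuivRep.Sub X, (∑ i, σ i * (U.dimVec i : ℤ)) ≤ 0

/-- `σ`-stability of a representation. -/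
def IsStable {t h : A → V} (σ : V → ℤ) (X : QuivRep K V A t h) : Prop :=
  (∑ i, σ i * (X.dimVec i : ℤ)) = 0 ∧ X.dimVec ≠ (fun _ => 0) ∧
  ∀ U : QuivRep.Sub X, U.dimVec ≠ (fun _ => 0) → U.dimVec ≠ X.dimVec →
    (∑ i, σ i * (U.dimVec i : ℤ)) < 0

/-- Isomorphism of representations. -/
def RepIso {t h : A → V} (X Y : QuivRep K V A t h) : Prop :=
  ∃ e : ∀ i, X.sp i ≃ₗ[K] Y.sp i,
    ∀ (a : A) (x : X.sp (t a)), e (h a) (X.map a x) = Y.map a (e (t a) x)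

/-- A quiver exceptional sequence of dimension vectors. -/
def IsQES (t h : A → V) {l : ℕ} (b : Fin l → V → ℕ) : Prop :=
  (∀ j, isRealSchurRoot K t h (b j)) ∧
  ∀ i j : Fin l, i < j →
    homMin K t h (b i) (b j) = 0 ∧ extMin K t h (b i) (b j) = 0 ∧
      eulerForm t h (natZ (b j)) (natZ (b i)) ≤ 0

/-- The cone of nonnegative rational linear combinations of a finite set of integral
vectors. -/
def coneOf (C : Finset (V → ℤ)) : Set (V → ℚ) :=
  {x | ∃ lam : (V → ℤ) → ℚ, (∀ c, 0 ≤ lam c) ∧ x = ∑ c ∈ C, lam c • intQ c}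

/-- A compatible subset of the set `Ψ(Q)_{≥ -1}` of almost positive real Schur roots. -/
def IsCompatible (t h : A → V) (C : Finset (V → ℤ)) : Prop :=
  (∀ x ∈ C, (∃ β : V → ℕ, isRealSchurRoot K t h β ∧ x = natZ β) ∨
      (∃ i : V, x = fun j => -(gammaRoot t h i j : ℤ))) ∧
  (∀ x ∈ C, ∀ y ∈ C, x ≠ y →
    (∀ β₁ β₂ : V → ℕ, isRealSchurRoot K t h β₁ → isRealSchurRoot K t h β₂ →
      x = natZ β₁ → y = natZ β₂ → extMin K t h β₁ β₂ = 0) ∧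
    (∀ (β : V → ℕ) (i : V), isRealSchurRoot K t h β →
      x = natZ β → y = (fun j => -(gammaRoot t h i j : ℤ)) → β i = 0))

/-- The domain of semi-invariants `D(β) ⊆ ℚ^{Q_0}`. -/
def Dom (t h : A → V) (β : V → ℕ) : Set (V → ℚ) :=
  {x | eulerForm t h x (natQ β) = 0 ∧
    ∀ β' : V → ℕ, Embeds K t h β' β → eulerForm t h x (natQ β') ≤ 0}

/-- A quiver exceptional set: a subset of `Ψ(Q)_{≥ -1}` of the form
`{β_1,…,β_l, −γ_{i_{l+1}},…,−γ_{i_m}}` with `β_j(i_k) = 0` and whose real-Schur-root part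
can be ordered into a quiver exceptional sequence. -/
def IsQExcSet (t h : A → V) (E : Finset (V → ℤ)) : Prop :=
  ∃ (l m : ℕ) (b : Fin l → V → ℕ) (g : Fin m → V),
    Function.Injective b ∧ Function.Injective g ∧ IsQES K t h b ∧
    (∀ j k, b j (g k) = 0) ∧
    (E : Set (V → ℤ)) =
      (Set.range fun j => natZ (b j)) ∪
      (Set.range fun k => (fun v => -(gammaRoot t h (g k) v : ℤ)))


/-- The underlying graph of the quiver is connected. -/
def IsConnectedQuiver (t h : A → V) : Prop :=
  ∀ i j : V,
    Relation.ReflTransGen (fun u v => ∃ a, (t a = u ∧ h a = v) ∨ (t a = v ∧ h a = u)) i j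

/-- Morphisms of representations. -/
structure RepHom {K : Type} [Field K] {V A : Type} {t h : A → V}
    (X Y : QuivRep K V A t h) : Type where
  app : ∀ i, X.sp i →ₗ[K] Y.sp i
  comm : ∀ a : A, (app (h a)).comp (X.map a) = (Y.map a).comp (app (t a))

namespace RepHom

variable {K₀ : Type} [Field K₀] {t h : A → V}

/-- The identity morphism. -/
def idHom (X : QuivRep K₀ V A t h) : RepHom X X :=
  ⟨fun _ => LinearMap.id, fun a => by ext x; simp⟩

/-- Composition of morphisms. -/
def comp {X Y Z : QuivRep K₀ V A t h} (f : RepHom X Y) (g : RepHom Y Z) : RepHom X Z :=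
  ⟨fun i => (g.app i).comp (f.app i), fun a => by
    ext x
    have hf := LinearMap.congr_fun (f.comm a) x
    have hg := LinearMap.congr_fun (g.comm a) (f.app (t a) x)
    simp only [LinearMap.comp_apply] at hf hg ⊢
    rw [hf, hg]⟩

/-- Sum of morphisms. -/
def add {X Y : QuivRep K₀ V A t h} (f g : RepHom X Y) : RepHom X Y :=
  ⟨fun i => f.app i + g.app i, fun a => by
    simp only [LinearMap.add_comp, LinearMap.comp_add, f.comm a, g.comm a]⟩

/-- Scalar multiple of a morphism. -/
def smul {X Y : QuivRep K₀ V A t h} (c : K₀) (f : RepHom X Y) : RepHom X Y :=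
  ⟨fun i => c • f.app i, fun a => by
    simp only [LinearMap.smul_comp, LinearMap.comp_smul, f.comm a]⟩

end RepHom

/-- The number of arrows `i → j` in the Ext-quiver `Q(𝓔)` of a sequence of dimension
vectors: `−⟨β_i, β_j⟩` for `i ≠ j`. -/
def extMult (t h : A → V) {l : ℕ} (b : Fin l → V → ℕ) (i j : Fin l) : ℕ :=
  if i = j then 0 else (-(eulerForm t h (natZ (b i)) (natZ (b j)))).toNat

/-- The arrow set of the Ext-quiver `Q(𝓔)`. -/
abbrev ExtArrow (t h : A → V) {l : ℕ} (b : Fin l → V → ℕ) : Type :=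
  (i : Fin l) × (j : Fin l) × Fin (extMult t h b i j)

/-- The representation space `rep(Q,β)` as a product of matrix spaces. -/
abbrev RepSpace (t h : A → V) (β : V → ℕ) : Type :=
  ∀ a : A, Matrix (Fin (β (h a))) (Fin (β (t a))) K

/-- The (base-change) action of `GL(β)` on `rep(Q,β)`. -/
def glAct (t h : A → V) {β : V → ℕ}
    (g : ∀ i, Matrix.GeneralLinearGroup (Fin (β i)) K) (W : RepSpace K t h β) :
    RepSpace K t h β :=
  fun a => (g (h a) : Matrix (Fin (β (h a))) (Fin (β (h a))) K) * W a *
    (((g (t a))⁻¹ : Matrix.GeneralLinearGroup (Fin (β (t a))) K) :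
      Matrix (Fin (β (t a))) (Fin (β (t a))) K)

/-- A polynomial function on `rep(Q,β)`. -/
def IsPolyFun (t h : A → V) {β : V → ℕ} (f : RepSpace K t h β → K) : Prop :=
  ∃ P : MvPolynomial ((a : A) × (Fin (β (h a)) × Fin (β (t a)))) K,
    ∀ W, f W = MvPolynomial.eval (fun x => W x.1 x.2.1 x.2.2) P

/-- The weight space `SI(Q,β)_σ` of semi-invariant polynomial functions of weight `σ`. -/
def SIweight (t h : A → V) (β : V → ℕ) (σ : V → ℤ) :
    Submodule K (RepSpace K t h β → K) where
  carrier := {f | IsPolyFun K t h f ∧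
    ∀ (g : ∀ i, Matrix.GeneralLinearGroup (Fin (β i)) K) (W : RepSpace K t h β),
      f (glAct K t h g W) =
        (((∏ i, (Matrix.GeneralLinearGroup.det (g i)) ^ σ i : Kˣ) : K)) * f W}
  zero_mem' := by
    refine ⟨⟨0, by simp⟩, by simp⟩
  add_mem' := by
    rintro f g ⟨⟨P, hP⟩, hf⟩ ⟨⟨Q, hQ⟩, hg⟩
    refine ⟨⟨P + Q, fun W => ?_⟩, fun gg W => ?_⟩
    · simp [hP W, hQ W]
    · simp only [Pi.add_apply, hf gg W, hg gg W]; ring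
  smul_mem' := by
    rintro c f ⟨⟨P, hP⟩, hf⟩
    refine ⟨⟨MvPolynomial.C c * P, fun W => ?_⟩, fun gg W => ?_⟩
    · simp [hP W]
    · simp only [Pi.smul_apply, hf gg W, smul_eq_mul]; ring

/-- Entry of a matrix accessed through natural-number indices. -/
def entryN {m n : ℕ} (M : Matrix (Fin m) (Fin n) K) (r c : ℕ) : K :=
  if hr : r < m then (if hc : c < n then M ⟨r, hr⟩ ⟨c, hc⟩ else 0) else 0

/-- The matrix of the map `d^V_W` (with `V` of dimension vector `α` varying and `W` of
dimension vector `w` fixed), in the standard bases. -/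
def schofieldMatrix (t h : A → V) {α w : V → ℕ}
    (Vm : RepSpace K t h α) (W : RepSpace K t h w) :
    Matrix ((a : A) × (Fin (w (h a)) × Fin (α (t a)))) ((i : V) × (Fin (w i) × Fin (α i))) K :=
  fun r c =>
    (if c.1 = h r.1 ∧ (c.2.1 : ℕ) = (r.2.1 : ℕ) then
      entryN K (Vm r.1) (c.2.2 : ℕ) (r.2.2 : ℕ) else 0)
    - (if c.1 = t r.1 ∧ (c.2.2 : ℕ) = (r.2.2 : ℕ) then
      entryN K (W r.1) (r.2.1 : ℕ) (c.2.1 : ℕ) else 0)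

/-- The Schofield semi-invariant `c_W : rep(Q,α) → K`, `V ↦ det d^V_W` (defined when
`⟨α, dim W⟩ = 0`, i.e. when `d^V_W` is a square matrix). -/
def schofieldSI (t h : A → V) {α w : V → ℕ} (W : RepSpace K t h w)
    (Vm : RepSpace K t h α) : K :=
  if hc : Fintype.card ((i : V) × (Fin (w i) × Fin (α i))) =
      Fintype.card ((a : A) × (Fin (w (h a)) × Fin (α (t a)))) then
    ((schofieldMatrix K t h Vm W).submatrix (Fintype.equivOfCardEq hc) id).det
  else 0

/-- The representation of `Q` attached to a point of `rep(Q,β)`. -/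
def toRep (t h : A → V) {β : V → ℕ} (W : RepSpace K t h β) : QuivRep K V A t h where
  sp i := Fin (β i) → K
  map a := Matrix.mulVecLin (W a)

set_option linter.unusedSectionVars false
set_option linter.unusedSimpArgs false
set_option linter.unusedVariables false
set_option linter.style.haveILetI false

namespace QX
open QuivRep
variable {K : Type} [Field K] {V A : Type} [Fintype V] [DecidableEq V] [Fintype A] {t h : A → V}

/-- families of linear maps -/
abbrev Fam (X Y : QuivRep K V A t h) : Type := ∀ i, X.sp i →ₗ[K] Y.sp i

/-- morphisms -/
def Mor {X Y : QuivRep K V A t h} (f : Fam X Y) : Prop :=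
  ∀ a x, f (h a) (X.map a x) = Y.map a (f (t a) x)

def HomZ (X Y : QuivRep K V A t h) : Prop := ∀ f : Fam X Y, Mor f → f = 0

def ExtZ (X Y : QuivRep K V A t h) : Prop :=
  ∀ ψ : (∀ a, X.sp (t a) →ₗ[K] Y.sp (h a)), ∃ φ : Fam X Y,
    ∀ a x, φ (h a) (X.map a x) - Y.map a (φ (t a) x) = ψ a x

def td (X : QuivRep K V A t h) : ℕ := ∑ i, X.dimVec i

/-- nonzero representation -/
def NZ (X : QuivRep K V A t h) : Prop := ∃ i, ∃ x : X.sp i, x ≠ 0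

/-- vanishing on a set of vertices -/
def Van (S : Finset V) (X : QuivRep K V A t h) : Prop := ∀ i ∈ S, ∀ x : X.sp i, x = 0

def fcomp {X Y Z : QuivRep K V A t h} (g : Fam Y Z) (f : Fam X Y) : Fam X Z :=
  fun i => (g i).comp (f i)

theorem Mor.comp {X Y Z : QuivRep K V A t h} {g : Fam Y Z} {f : Fam X Y}
    (hg : Mor g) (hf : Mor f) : Mor (fcomp g f) := by
  intro a x
  simp only [fcomp, LinearMap.comp_apply]
  rw [hf a x, hg a]

theorem Mor.sub {X Y : QuivRep K V A t h} {g f : Fam X Y}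
    (hg : Mor g) (hf : Mor f) : Mor (g - f) := by
  intro a x
  simp only [Pi.sub_apply, LinearMap.sub_apply, map_sub]
  rw [hf a x, hg a]

theorem Mor.smul {X Y : QuivRep K V A t h} {f : Fam X Y} (c : K)
    (hf : Mor f) : Mor (c • f) := by
  intro a x
  simp only [Pi.smul_apply, LinearMap.smul_apply, map_smul]
  rw [hf a x]

def idF (X : QuivRep K V A t h) : Fam X X := fun _ => LinearMap.id

theorem mor_id (X : QuivRep K V A t h) : Mor (idF X) := fun _ _ => rfl

theorem mem_homS_iff {X Y : QuivRep K V A t h} (f : Fam X Y) : f ∈ homS X Y ↔ Mor f := by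
  constructor
  · intro hf a x
    exact LinearMap.congr_fun (hf a) x
  · intro hf a
    ext x
    exact hf a x

theorem homS_eq_ker (X Y : QuivRep K V A t h) : homS X Y = LinearMap.ker (dmap X Y) := by
  ext f
  rw [mem_homS_iff, LinearMap.mem_ker]
  constructor
  · intro hf
    funext a
    ext x
    simp [dmap, hf a x]
  · intro hf a x
    have := LinearMap.congr_fun (congrFun hf a) x
    simpa [dmap, sub_eq_zero] using this

theorem homZ_iff {X Y : QuivRep K V A t h} : HomZ X Y ↔ homDim X Y = 0 := by
  unfold homDim
  rw [Submodule.finrank_eq_zero, Submodule.eq_bot_iff]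
  simp only [mem_homS_iff]
  rfl

theorem extZ_iff {X Y : QuivRep K V A t h} : ExtZ X Y ↔ extDim X Y = 0 := by
  unfold extDim
  rw [Module.finrank_zero_iff, Submodule.Quotient.subsingleton_iff,
    LinearMap.range_eq_top]
  constructor
  · intro H ψ
    obtain ⟨φ, hφ⟩ := H ψ
    refine ⟨φ, ?_⟩
    funext a
    ext x
    exact hφ a x
  · intro H ψ
    obtain ⟨φ, hφ⟩ := H ψ
    exact ⟨φ, fun a x => LinearMap.congr_fun (congrFun hφ a) x⟩

theorem euler_eq (X Y : QuivRep K V A t h) :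
    (homDim X Y : ℤ) - (extDim X Y : ℤ) = eulerForm t h (natZ X.dimVec) (natZ Y.dimVec) := by
  have h1 := LinearMap.finrank_range_add_finrank_ker (dmap X Y)
  have h2 := Submodule.finrank_quotient_add_finrank (LinearMap.range (dmap X Y))
  rw [← homS_eq_ker] at h1
  have h3 : Module.finrank K (∀ i, X.sp i →ₗ[K] Y.sp i) = ∑ i, X.dimVec i * Y.dimVec i := by
    rw [Module.finrank_pi_fintype]
    simp [Module.finrank_linearMap, dimVec]
  have h4 : Module.finrank K (∀ a : A, X.sp (t a) →ₗ[K] Y.sp (h a))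
      = ∑ a, X.dimVec (t a) * Y.dimVec (h a) := by
    rw [Module.finrank_pi_fintype]
    simp [Module.finrank_linearMap, dimVec]
  have h5 : eulerForm t h (natZ X.dimVec) (natZ Y.dimVec)
     = ((∑ i, X.dimVec i * Y.dimVec i : ℕ) : ℤ) -
      ((∑ a, X.dimVec (t a) * Y.dimVec (h a) : ℕ) : ℤ) := by
    simp [eulerForm, natZ]
  rw [h5, ← h3, ← h4]
  unfold homDim extDim
  omega

theorem natQ_euler (x y : V → ℕ) :
    eulerForm t h (natQ x) (natQ y) = ((eulerForm t h (natZ x) (natZ y) : ℤ) : ℚ) := by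
  simp [eulerForm, natZ, natQ]

/-- rational Euler pairing against a representation -/
def pr (x : V → ℚ) (Y : QuivRep K V A t h) : ℚ := eulerForm t h x (natQ Y.dimVec)

theorem euler_add_right (x y z : V → ℚ) :
    eulerForm t h x (y + z) = eulerForm t h x y + eulerForm t h x z := by
  simp [eulerForm, mul_add, Finset.sum_add_distrib]; ring

theorem euler_add_left (x y z : V → ℚ) :
    eulerForm t h (x + y) z = eulerForm t h x z + eulerForm t h y z := by
  simp [eulerForm, add_mul, Finset.sum_add_distrib]; ring

theorem euler_smul_left (c : ℚ) (x z : V → ℚ) :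
    eulerForm t h (c • x) z = c * eulerForm t h x z := by
  simp [eulerForm, mul_assoc, Finset.mul_sum, mul_sub]

/-- the Euler form as a linear functional in the left variable -/
def eulL (t h : A → V) (z : V → ℚ) : (V → ℚ) →ₗ[ℚ] ℚ where
  toFun x := eulerForm t h x z
  map_add' x y := euler_add_left x y z
  map_smul' c x := by simp [euler_smul_left]

theorem pr_rep (X Y : QuivRep K V A t h) :
    pr (natQ X.dimVec) Y = (homDim X Y : ℚ) - (extDim X Y : ℚ) := by
  unfold pr
  rw [natQ_euler, ← euler_eq]
  simp

/-- short exact sequences -/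
structure SES (N M Q : QuivRep K V A t h) where
  f : Fam N M
  g : Fam M Q
  mf : Mor f
  mg : Mor g
  inj : ∀ i, Function.Injective (f i)
  surj : ∀ i, Function.Surjective (g i)
  ex : ∀ i x, g i x = 0 ↔ ∃ y, f i y = x

namespace SES
variable {N M Q : QuivRep K V A t h}

theorem gf (s : SES N M Q) (i : V) (x : N.sp i) : s.g i (s.f i x) = 0 := (s.ex i _).2 ⟨x, rfl⟩

theorem fam_gf (s : SES N M Q) : fcomp s.g s.f = 0 := by
  funext i
  ext x
  exact s.gf i x

theorem liftL (s : SES N M Q) (i : V) {W : Type} [AddCommGroup W] [Module K W] (φ : W →ₗ[K] M.sp i)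
    (hφ : ∀ x, s.g i (φ x) = 0) : ∃ φ' : W →ₗ[K] N.sp i, ∀ x, s.f i (φ' x) = φ x := by
  obtain ⟨l, hl⟩ := LinearMap.exists_leftInverse_of_injective (s.f i)
    (LinearMap.ker_eq_bot.2 (s.inj i))
  refine ⟨l.comp φ, fun x => ?_⟩
  obtain ⟨y, hy⟩ := (s.ex i _).1 (hφ x)
  have := LinearMap.congr_fun hl y
  simp only [LinearMap.comp_apply, LinearMap.id_apply] at this ⊢
  rw [← hy, this]

theorem liftS (s : SES N M Q) (i : V) {W : Type} [AddCommGroup W] [Module K W] (φ : W →ₗ[K] Q.sp i) :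
    ∃ φ' : W →ₗ[K] M.sp i, ∀ x, s.g i (φ' x) = φ x := by
  obtain ⟨r, hr⟩ := LinearMap.exists_rightInverse_of_surjective (s.g i)
    (LinearMap.range_eq_top.2 (s.surj i))
  refine ⟨r.comp φ, fun x => ?_⟩
  exact LinearMap.congr_fun hr (φ x)

theorem descL (s : SES N M Q) (i : V) {W : Type} [AddCommGroup W] [Module K W] (φ : M.sp i →ₗ[K] W)
    (hφ : ∀ x, φ (s.f i x) = 0) : ∃ φ' : Q.sp i →ₗ[K] W, ∀ x, φ' (s.g i x) = φ x := by
  obtain ⟨r, hr⟩ := LinearMap.exists_rightInverse_of_surjective (s.g i)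
    (LinearMap.range_eq_top.2 (s.surj i))
  refine ⟨φ.comp r, fun x => ?_⟩
  have h1 : s.g i (r (s.g i x) - x) = 0 := by
    have := LinearMap.congr_fun hr (s.g i x)
    simp only [LinearMap.comp_apply, LinearMap.id_apply] at this
    rw [map_sub, this, sub_self]
  obtain ⟨y, hy⟩ := (s.ex i _).1 h1
  have h2 := hφ y
  rw [hy, map_sub, sub_eq_zero] at h2
  exact h2

theorem extL (s : SES N M Q) (i : V) {W : Type} [AddCommGroup W] [Module K W] (φ : N.sp i →ₗ[K] W) :
    ∃ φ' : M.sp i →ₗ[K] W, ∀ x, φ' (s.f i x) = φ x := by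
  obtain ⟨l, hl⟩ := LinearMap.exists_leftInverse_of_injective (s.f i)
    (LinearMap.ker_eq_bot.2 (s.inj i))
  refine ⟨φ.comp l, fun x => ?_⟩
  have := LinearMap.congr_fun hl x
  simp only [LinearMap.comp_apply, LinearMap.id_apply] at this ⊢
  rw [this]

theorem dim_eq (s : SES N M Q) (i : V) : M.dimVec i = N.dimVec i + Q.dimVec i := by
  have h1 := LinearMap.finrank_range_add_finrank_ker (s.g i)
  have h2 : LinearMap.ker (s.g i) = LinearMap.range (s.f i) := by
    ext x
    rw [LinearMap.mem_ker, s.ex]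
    rfl
  rw [h2, LinearMap.finrank_range_of_inj (s.inj i),
    LinearMap.range_eq_top.2 (s.surj i), finrank_top] at h1
  unfold dimVec
  omega

theorem td_eq (s : SES N M Q) : td M = td N + td Q := by
  unfold td
  rw [← Finset.sum_add_distrib]
  exact Finset.sum_congr rfl fun i _ => s.dim_eq i

theorem pr_eq (s : SES N M Q) (x : V → ℚ) : pr x M = pr x N + pr x Q := by
  unfold pr
  rw [← euler_add_right]
  congr 1
  funext i
  simp [natQ, s.dim_eq i]

theorem mor_liftL (s : SES N M Q) {W : QuivRep K V A t h} (φ : Fam W M) (hm : Mor φ)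
    (hφ : ∀ i x, s.g i (φ i x) = 0) :
    ∃ φ' : Fam W N, Mor φ' ∧ ∀ i x, s.f i (φ' i x) = φ i x := by
  choose φ' h' using fun i => s.liftL i (φ i) (hφ i)
  refine ⟨φ', fun a x => s.inj _ ?_, h'⟩
  rw [h', s.mf, h', hm]

theorem mor_descL (s : SES N M Q) {W : QuivRep K V A t h} (φ : Fam M W) (hm : Mor φ)
    (hφ : ∀ i x, φ i (s.f i x) = 0) :
    ∃ φ' : Fam Q W, Mor φ' ∧ ∀ i x, φ' i (s.g i x) = φ i x := by
  choose φ' h' using fun i => s.descL i (φ i) (hφ i)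
  refine ⟨φ', fun a x => ?_, h'⟩
  obtain ⟨y, rfl⟩ := s.surj _ x
  rw [← s.mg, h', h', hm]

theorem extZ_quot (s : SES N M Q) {W : QuivRep K V A t h} (H : ExtZ W M) : ExtZ W Q := by
  intro ψ
  choose ψ' h' using fun a => s.liftS (h a) (ψ a)
  obtain ⟨φ, hφ⟩ := H ψ'
  refine ⟨fcomp s.g φ, fun a x => ?_⟩
  simp only [fcomp, LinearMap.comp_apply]
  rw [← h', ← hφ, map_sub, s.mg]

theorem extZ_sub (s : SES N M Q) {Y : QuivRep K V A t h} (H : ExtZ M Y) : ExtZ N Y := by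
  intro ψ
  choose ψ' h' using fun a => s.extL (t a) (ψ a)
  obtain ⟨φ, hφ⟩ := H ψ'
  refine ⟨fcomp φ s.f, fun a x => ?_⟩
  simp only [fcomp, LinearMap.comp_apply]
  rw [← h', ← hφ, s.mf]

theorem extZ_ker (s : SES N M Q) {W : QuivRep K V A t h} (H0 : HomZ W Q) (H : ExtZ W M) : ExtZ W N := by
  intro ψ
  obtain ⟨φ, hφ⟩ := H fun a => (s.f (h a)).comp (ψ a)
  have h1 : fcomp s.g φ = 0 := by
    apply H0
    intro a x
    have := congrArg (s.g (h a)) (hφ a x)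
    simp only [LinearMap.comp_apply, s.gf, map_sub, sub_eq_zero] at this
    simp only [fcomp, LinearMap.comp_apply]
    rw [this, s.mg]
  choose φ' h' using fun i => s.liftL i (φ i) (fun x => LinearMap.congr_fun (congrFun h1 i) x)
  refine ⟨φ', fun a x => s.inj _ ?_⟩
  rw [map_sub, h', s.mf, h', hφ]
  rfl

theorem extZ_coker (s : SES N M Q) {Y : QuivRep K V A t h} (H0 : HomZ N Y) (H : ExtZ M Y) : ExtZ Q Y := by
  intro ψ
  obtain ⟨φ, hφ⟩ := H fun a => (ψ a).comp (s.g (t a))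
  have h1 : fcomp φ s.f = 0 := by
    apply H0
    intro a x
    have := hφ a (s.f _ x)
    simp only [LinearMap.comp_apply, s.gf, map_zero, sub_eq_zero] at this
    simp only [fcomp, LinearMap.comp_apply]
    rw [s.mf, this]
  choose φ' h' using fun i => s.descL i (φ i) (fun x => LinearMap.congr_fun (congrFun h1 i) x)
  refine ⟨φ', fun a x => ?_⟩
  obtain ⟨y, rfl⟩ := s.surj _ x
  rw [← s.mg, h', h', hφ]
  rfl

theorem extZ_mid (s : SES N M Q) {W : QuivRep K V A t h} (H1 : ExtZ W N) (H2 : ExtZ W Q) : ExtZ W M := by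
  intro ψ
  obtain ⟨φ0, h0⟩ := H2 fun a => (s.g (h a)).comp (ψ a)
  choose φ1 h1 using fun i => s.liftS i (φ0 i)
  have h2 : ∀ a, ∃ ψ' : W.sp (t a) →ₗ[K] N.sp (h a), ∀ x, s.f (h a) (ψ' x) =
      (ψ a - ((φ1 (h a)).comp (W.map a) - (M.map a).comp (φ1 (t a)))) x := by
    intro a
    apply s.liftL
    intro x
    simp only [LinearMap.sub_apply, LinearMap.comp_apply, map_sub, h1]
    have := h0 a x
    simp only [LinearMap.comp_apply] at this
    rw [s.mg, h1, this, sub_self]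
  choose ψ' hψ' using h2
  obtain ⟨φ2, h3⟩ := H1 ψ'
  refine ⟨fun i => φ1 i + (s.f i).comp (φ2 i), fun a x => ?_⟩
  have h4 := hψ' a x
  rw [← h3, map_sub, s.mf] at h4
  simp only [LinearMap.sub_apply, LinearMap.comp_apply, LinearMap.add_apply, map_add] at h4 ⊢
  rw [← sub_eq_zero] at h4 ⊢
  rw [← h4]
  abel

theorem mor_ext (s : SES N M Q) {Y : QuivRep K V A t h} (H : ExtZ Q Y) (φ : Fam N Y) (hm : Mor φ) :
    ∃ Φ : Fam M Y, Mor Φ ∧ ∀ i x, Φ i (s.f i x) = φ i x := by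
  choose φ0 h0 using fun i => s.extL i (φ i)
  have h2 : ∀ a, ∃ ψ : Q.sp (t a) →ₗ[K] Y.sp (h a), ∀ x, ψ (s.g _ x) =
      ((φ0 (h a)).comp (M.map a) - (Y.map a).comp (φ0 (t a))) x := by
    intro a
    apply s.descL
    intro x
    simp only [LinearMap.sub_apply, LinearMap.comp_apply]
    rw [← s.mf, h0, h0, hm, sub_self]
  choose ψ hψ using h2
  obtain ⟨φ1, h1⟩ := H ψ
  refine ⟨φ0 - fcomp φ1 s.g, fun a x => ?_, fun i x => ?_⟩
  · have := hψ a x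
    rw [← h1] at this
    simp only [LinearMap.sub_apply, LinearMap.comp_apply, fcomp, Pi.sub_apply, map_sub] at this ⊢
    rw [s.mg]
    rw [← sub_eq_zero] at this ⊢
    rw [← neg_eq_zero, ← this]
    abel
  · simp [fcomp, s.gf, h0]

theorem homZ_mid_left (s : SES N M Q) {Y : QuivRep K V A t h} (H1 : HomZ N Y) (H2 : HomZ Q Y) : HomZ M Y := by
  intro φ hm
  have h1 : fcomp φ s.f = 0 := H1 _ (hm.comp s.mf)
  obtain ⟨φ', hm', h'⟩ := s.mor_descL φ hm (fun i x => LinearMap.congr_fun (congrFun h1 i) x)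
  have h2 := H2 _ hm'
  funext i
  ext x
  rw [← h', h2]
  rfl

theorem homZ_quot (s : SES N M Q) {Y : QuivRep K V A t h} (H : HomZ M Y) : HomZ Q Y := by
  intro φ hm
  have h1 := H _ (hm.comp s.mg)
  funext i
  ext x
  obtain ⟨y, rfl⟩ := s.surj _ x
  exact LinearMap.congr_fun (congrFun h1 i) y

theorem homZ_sub (s : SES N M Q) {W : QuivRep K V A t h} (H : HomZ W M) : HomZ W N := by
  intro φ hm
  have h1 := H _ (s.mf.comp hm)
  funext i
  ext x
  apply s.inj
  rw [show s.f i (φ i x) = 0 from LinearMap.congr_fun (congrFun h1 i) x]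
  simp

theorem homZ_ker (s : SES N M Q) {Y : QuivRep K V A t h} (H : HomZ M Y) (H2 : ExtZ Q Y) : HomZ N Y := by
  intro φ hm
  obtain ⟨Φ, hΦ, h1⟩ := s.mor_ext H2 φ hm
  have := H Φ hΦ
  funext i
  ext x
  rw [← h1, this]
  rfl

theorem van_sub (s : SES N M Q) {S : Finset V} (H : Van S M) : Van S N := fun i hi x => by
  apply s.inj
  rw [H i hi (s.f i x), map_zero]

theorem van_quot (s : SES N M Q) {S : Finset V} (H : Van S M) : Van S Q := fun i hi x => by
  obtain ⟨y, rfl⟩ := s.surj _ x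
  rw [H i hi y, map_zero]

theorem van_mid (s : SES N M Q) {S : Finset V} (H1 : Van S N) (H2 : Van S Q) : Van S M := fun i hi x => by
  obtain ⟨y, rfl⟩ := (s.ex i x).1 (H2 i hi _)
  rw [H1 i hi y, map_zero]

end SES

/-- subrepresentation as a representation -/
def subRep (X : QuivRep K V A t h) (U : Sub X) : QuivRep K V A t h where
  sp i := U.sub i
  map a := (X.map a).restrict (U.le a)

/-- quotient representation -/
def quotRep (X : QuivRep K V A t h) (U : Sub X) : QuivRep K V A t h where
  sp i := X.sp i ⧸ U.sub i
  map a := Submodule.mapQ _ _ (X.map a) (U.le a)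

def sesSub (X : QuivRep K V A t h) (U : Sub X) : SES (subRep X U) X (quotRep X U) where
  f i := (U.sub i).subtype
  g i := (U.sub i).mkQ
  mf _ _ := rfl
  mg _ _ := rfl
  inj i := (U.sub i).injective_subtype
  surj i := (U.sub i).mkQ_surjective
  ex i x := by
    have : (U.sub i).mkQ x = 0 ↔ x ∈ U.sub i := by simp
    refine this.trans ⟨fun hx => ⟨⟨x, hx⟩, rfl⟩, ?_⟩
    rintro ⟨y, rfl⟩
    exact y.2

def kerSub {X Y : QuivRep K V A t h} (f : Fam X Y) (hf : Mor f) : Sub X where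
  sub i := LinearMap.ker (f i)
  le a x hx := by
    rw [LinearMap.mem_ker] at hx ⊢
    rw [hf, hx, map_zero]

def imSub {X Y : QuivRep K V A t h} (f : Fam X Y) (hf : Mor f) : Sub Y where
  sub i := LinearMap.range (f i)
  le a x hx := by
    obtain ⟨y, rfl⟩ := hx
    exact ⟨X.map a y, hf a y⟩

def sesSurj {X Y : QuivRep K V A t h} (f : Fam X Y) (hf : Mor f)
    (hs : ∀ i, Function.Surjective (f i)) : SES (subRep X (kerSub f hf)) X Y where
  f i := (LinearMap.ker (f i)).subtype
  g := f
  mf _ _ := rfl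
  mg := hf
  inj i := Submodule.injective_subtype _
  surj := hs
  ex i x := by
    refine ⟨fun hx => ⟨⟨x, hx⟩, rfl⟩, ?_⟩
    rintro ⟨y, rfl⟩
    exact y.2

def sesInj {X Y : QuivRep K V A t h} (f : Fam X Y) (hf : Mor f)
    (hi : ∀ i, Function.Injective (f i)) : SES X Y (quotRep Y (imSub f hf)) where
  f := f
  g i := (LinearMap.range (f i)).mkQ
  mf := hf
  mg _ _ := rfl
  inj := hi
  surj i := Submodule.mkQ_surjective _
  ex i x := by
    have : (LinearMap.range (f i)).mkQ x = 0 ↔ x ∈ LinearMap.range (f i) := by simp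
    exact this

/-- corestriction to the image -/
def toIm {X Y : QuivRep K V A t h} (f : Fam X Y) (hf : Mor f) : Fam X (subRep Y (imSub f hf)) :=
  fun i => (f i).rangeRestrict

theorem toIm_mor {X Y : QuivRep K V A t h} (f : Fam X Y) (hf : Mor f) : Mor (toIm f hf) := by
  intro a x
  apply Subtype.ext
  exact hf a x

theorem toIm_surj {X Y : QuivRep K V A t h} (f : Fam X Y) (hf : Mor f) (i : V) :
    Function.Surjective (toIm f hf i) := LinearMap.surjective_rangeRestrict _

def sesKer {X Y : QuivRep K V A t h} (f : Fam X Y) (hf : Mor f) :=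
  sesSurj (toIm f hf) (toIm_mor f hf) (toIm_surj f hf)

theorem td_zero_iff (X : QuivRep K V A t h) : td X = 0 ↔ ¬ NZ X := by
  unfold td NZ dimVec
  rw [Finset.sum_eq_zero_iff]
  push Not
  refine ⟨fun H i x => ?_, fun H i _ => ?_⟩
  · have := H i (Finset.mem_univ i)
    rw [Module.finrank_zero_iff] at this
    exact Subsingleton.elim _ _
  · rw [Module.finrank_zero_iff]
    exact ⟨fun x y => by rw [H i x, H i y]⟩

theorem td_pos {X : QuivRep K V A t h} (H : NZ X) : 0 < td X := by
  rw [Nat.pos_iff_ne_zero, Ne, td_zero_iff]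
  exact not_not.2 H

theorem van_dim {S : Finset V} {X : QuivRep K V A t h} (H : Van S X) {i : V} (hi : i ∈ S) :
    X.dimVec i = 0 := by
  unfold dimVec
  rw [Module.finrank_zero_iff]
  exact ⟨fun x y => by rw [H i hi x, H i hi y]⟩

theorem van_of_dim {S : Finset V} {X : QuivRep K V A t h} (H : ∀ i ∈ S, X.dimVec i = 0) :
    Van S X := by
  intro i hi x
  have := H i hi
  unfold dimVec at this
  rw [Module.finrank_zero_iff] at this
  exact Subsingleton.elim _ _

end QX

namespace QX
open QuivRep
variable {K : Type} [Field K] {V A : Type} [Fintype V] [DecidableEq V] [Fintype A] {t h : A → V}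

theorem path_append {i j k : V} {p q : List A} (hp : IsPathFrom t h i p j)
    (hq : IsPathFrom t h j q k) : IsPathFrom t h i (p ++ q) k := by
  induction p generalizing i with
  | nil => cases hp; exact hq
  | cons a p ih => exact ⟨hp.1, ih hp.2⟩

theorem transGen_path {u v : V} (H : Relation.TransGen (fun u v => ∃ a, t a = u ∧ h a = v) u v) :
    ∃ p, p ≠ [] ∧ IsPathFrom t h u p v := by
  induction H with
  | single hr =>
    obtain ⟨a, ha, hb⟩ := hr
    exact ⟨[a], by simp, ha, hb⟩
  | tail _ hr ih =>
    obtain ⟨a, ha, hb⟩ := hr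
    obtain ⟨p, hp, hpp⟩ := ih
    exact ⟨p ++ [a], by simp, path_append hpp ⟨ha, hb⟩⟩

theorem wf_fwd (hQ : Acyclic t h) : WellFounded (fun u v : V => ∃ a, t a = u ∧ h a = v) := by
  let r : V → V → Prop := fun u v : V => ∃ a, t a = u ∧ h a = v
  have h1 : WellFounded (Relation.TransGen r) := by
    have : IsTrans V (Relation.TransGen r) := inferInstance
    have : Std.Irrefl (Relation.TransGen r) := ⟨fun u hu => by
      obtain ⟨p, hp, hpp⟩ := transGen_path hu
      exact hp (hQ _ _ hpp)⟩
    exact Finite.wellFounded_of_trans_of_irrefl _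
  exact Subrelation.wf (fun {u v} huv => Relation.TransGen.single huv) h1

theorem wf_bwd (hQ : Acyclic t h) : WellFounded (fun u v : V => ∃ a, h a = u ∧ t a = v) := by
  let r : V → V → Prop := fun u v : V => ∃ a, t a = u ∧ h a = v
  have h1 : WellFounded (fun u v => Relation.TransGen r v u) := by
    have : IsTrans V (fun u v => Relation.TransGen r v u) := ⟨fun a b c hab hbc => hbc.trans hab⟩
    have : Std.Irrefl (fun u v => Relation.TransGen r v u) := ⟨fun u hu => by
      obtain ⟨p, hp, hpp⟩ := transGen_path hu
      exact hp (hQ _ _ hpp)⟩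
    exact Finite.wellFounded_of_trans_of_irrefl _
  exact Subrelation.wf (fun {u v} huv => Relation.TransGen.single (by
    obtain ⟨a, ha, hb⟩ := huv
    exact ⟨a, hb, ha⟩)) h1

/-- good paths from `i` to `j`, avoiding `S` -/
def GP (t h : A → V) (S : Finset V) (j : V) : V → List A → Prop
  | i, [] => i = j ∧ i ∉ S
  | i, a :: p => t a = i ∧ i ∉ S ∧ GP t h S j (h a) p

theorem gp_path {S : Finset V} {i j : V} {p : List A} (H : GP t h S j i p) :
    IsPathFrom t h i p j := by
  induction p generalizing i with
  | nil => exact H.1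
  | cons a p ih => exact ⟨H.1, ih H.2.2⟩

theorem gp_empty {i j : V} {p : List A} (H : IsPathFrom t h i p j) : GP t h ∅ j i p := by
  induction p generalizing i with
  | nil => exact ⟨H, by simp⟩
  | cons a p ih => exact ⟨H.1, by simp, ih H.2⟩

theorem paths_finite (hQ : Acyclic t h) (i j : V) : {p | IsPathFrom t h i p j}.Finite := by
  induction i using (wf_bwd hQ).induction with
  | _ i ih =>
    have h1 : {p | IsPathFrom t h i p j} ⊆ {[]} ∪ ⋃ a : {a // t a = i},
        (fun p => a.1 :: p) '' {p | IsPathFrom t h (h a) p j} := by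
      intro p hp
      cases p with
      | nil => left; rfl
      | cons a p =>
        right
        rw [Set.mem_iUnion]
        exact ⟨⟨a, hp.1⟩, p, hp.2, rfl⟩
    refine Set.Finite.subset ((Set.finite_singleton _).union (Set.finite_iUnion fun a => ?_)) h1
    exact (ih _ ⟨a.1, rfl, a.2⟩).image _

theorem gp_finite (hQ : Acyclic t h) (S : Finset V) (j i : V) :
    Finite {p // GP t h S j i p} :=
  (Set.Finite.subset (paths_finite hQ i j) (fun _ hp => gp_path hp) :
    Set.Finite {p | GP t h S j i p})

theorem gp_cons {S : Finset V} {j : V} {a : A} {p : List A} (ha : t a ∉ S)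
    (hp : GP t h S j (h a) p) : GP t h S j (t a) (a :: p) := ⟨rfl, ha, hp⟩

/-- indecomposable injective of the full subquiver on the complement of `S` -/
def injRep (K : Type) [Field K] (hQ : Acyclic t h) (S : Finset V) (j : V) : QuivRep K V A t h where
  sp i := {p // GP t h S j i p} → K
  inst3 i := by
    have := gp_finite hQ S j i
    infer_instance
  map a :=
    { toFun := fun f p => if hp : t a ∉ S then f ⟨a :: p.1, gp_cons hp p.2⟩ else 0
      map_add' := by
        intro f g
        funext p
        simp only [Pi.add_apply]
        split_ifs <;> simp
      map_smul' := by
        intro c f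
        funext p
        simp only [Pi.smul_apply, RingHom.id_apply]
        split_ifs <;> simp }

theorem injRep_map (hQ : Acyclic t h) (S : Finset V) (j : V) (a : A)
    (f : (injRep K hQ S j).sp (t a)) (p : {p // GP t h S j (h a) p}) (ha : t a ∉ S) :
    (injRep K hQ S j).map a f p = f ⟨a :: p.1, gp_cons ha p.2⟩ := by
  change (if hp : t a ∉ S then f ⟨a :: p.1, gp_cons hp p.2⟩ else 0) = _
  rw [dif_pos ha]

theorem gp_notMem {S : Finset V} {j i : V} {p : List A} (H : GP t h S j i p) : i ∉ S := by
  cases p with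
  | nil => exact H.2
  | cons a p => exact H.2.1

theorem injRep_van (hQ : Acyclic t h) (S : Finset V) (j : V) : Van S (injRep K hQ S j) := by
  intro i hi x
  funext p
  exact absurd hi (gp_notMem p.2)

/-- recursive solution used for injectivity -/
def injF (hQ : Acyclic t h) (S : Finset V) (j : V) (X : QuivRep K V A t h)
    (ψ : ∀ a, X.sp (t a) →ₗ[K] (injRep K hQ S j).sp (h a)) :
    (p : List A) → (i : V) → GP t h S j i p → (X.sp i →ₗ[K] K)
  | [], _, _ => 0
  | a :: p, _, ⟨rfl, _, hp⟩ => (injF hQ S j X ψ p (h a) hp).comp (X.map a) -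
      (LinearMap.proj (R := K) (φ := fun _ => K) (⟨p, hp⟩ : {p // GP t h S j (h a) p})).comp (ψ a)

theorem injF_cons (hQ : Acyclic t h) (S : Finset V) (j : V) (X : QuivRep K V A t h)
    (ψ : ∀ a, X.sp (t a) →ₗ[K] (injRep K hQ S j).sp (h a)) (a : A) (p : List A)
    (ha : t a ∉ S) (hp : GP t h S j (h a) p) (x : X.sp (t a)) :
    injF hQ S j X ψ (a :: p) (t a) (gp_cons ha hp) x =
      (injF hQ S j X ψ p (h a) hp (X.map a x) : K) - (ψ a x : _ → K) ⟨p, hp⟩ := by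
  rw [injF]
  · rfl
  · exact ha

theorem injRep_inj (hQ : Acyclic t h) (S : Finset V) (j : V) {X : QuivRep K V A t h}
    (hX : Van S X) : ExtZ X (injRep K hQ S j) := by
  intro ψ
  let F : Fam X (injRep K hQ S j) := fun i => LinearMap.pi fun p => injF hQ S j X ψ p.1 i p.2
  refine ⟨F, fun a x => ?_⟩
  by_cases ha : t a ∈ S
  · rw [hX _ ha x]; simp only [map_zero, sub_zero]
  · funext p
    change injF hQ S j X ψ p.1 (h a) p.2 (X.map a x) - (injRep K hQ S j).map a _ p = _
    rw [injRep_map hQ S j a _ p ha]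
    have e : F (t a) x ⟨a :: p.1, gp_cons ha p.2⟩ =
        injF hQ S j X ψ p.1 (h a) p.2 (X.map a x) - ψ a x p := by
      have e0 : ∀ i (x : X.sp i) (q : List A) (hq : GP t h S j i q), F i x ⟨q, hq⟩ =
        injF hQ S j X ψ q i hq x := fun _ _ _ _ => rfl
      rw [e0]
      exact injF_cons hQ S j X ψ a p.1 ha p.2 x
    rw [e]
    exact sub_sub_cancel _ _

def injG (S : Finset V) (j : V) (X : QuivRep K V A t h) (l : X.sp j →ₗ[K] K) :
    (p : List A) → (i : V) → GP t h S j i p → (X.sp i →ₗ[K] K)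
  | [], _, ⟨rfl, _⟩ => l
  | a :: p, _, ⟨rfl, _, hp⟩ => (injG S j X l p (h a) hp).comp (X.map a)

theorem injRep_hom (hQ : Acyclic t h) {S : Finset V} {j : V} (hj : j ∉ S)
    {X : QuivRep K V A t h} (hX : Van S X) (x : X.sp j) (hx : x ≠ 0) :
    ∃ f : Fam X (injRep K hQ S j), Mor f ∧ f j x ≠ 0 := by
  obtain ⟨l, hl⟩ := Module.Projective.exists_dual_ne_zero K hx
  let F : Fam X (injRep K hQ S j) := fun i => LinearMap.pi fun p => injG S j X l p.1 i p.2
  refine ⟨F, fun a x => ?_, fun H => hl ?_⟩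
  · by_cases ha : t a ∈ S
    · rw [hX _ ha x]; simp only [map_zero]
    · funext p
      rw [injRep_map hQ S j a _ p ha]
      change injG S j X l p.1 (h a) p.2 (X.map a x) = injG S j X l (a :: p.1) (t a) _ x
      rw [injG]
      · rfl
      · exact ha
  · have := congrFun H ⟨[], rfl, hj⟩
    change injG S j X l [] j ⟨rfl, hj⟩ x = 0 at this
    rw [injG] at this
    · exact this
    · exact hj

theorem injRep_hom_zero (hQ : Acyclic t h) {S : Finset V} {j : V}
    {X : QuivRep K V A t h} (hx : ∀ x : X.sp j, x = 0) : HomZ X (injRep K hQ S j) := by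
  intro f hf
  have key : ∀ (p : List A) (i : V) (hp : GP t h S j i p) (x : X.sp i), f i x ⟨p, hp⟩ = 0 := by
    intro p
    induction p with
    | nil =>
      rintro i ⟨rfl, _⟩ x
      rw [hx x, map_zero]; rfl
    | cons a p ih =>
      rintro i ⟨rfl, hi, hp⟩ x
      have := ih (h a) hp (X.map a x)
      rw [hf, injRep_map hQ S j a _ _ hi] at this
      exact this
  funext i
  ext x
  funext p
  exact key p.1 i p.2 x

/-- outgoing arrow map with relaxed typing -/
def outMap (Z : QuivRep K V A t h) : (i : V) → (a : A) → (t a = i) → (Z.sp i →ₗ[K] Z.sp (h a))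
  | _, a, rfl => Z.map a

def outPi (Z : QuivRep K V A t h) (i : V) :
    Z.sp i →ₗ[K] (∀ a : {a // t a = i}, Z.sp (h a.1)) :=
  LinearMap.pi fun a => outMap Z i a.1 a.2

def injO (hQ : Acyclic t h) (S : Finset V) (j i : V)
    (g : ∀ a : {a // t a = i}, (injRep K hQ S j).sp (h a.1)) : (q : List A) → GP t h S j i q → K
  | [], _ => 0
  | a :: p, hp => g ⟨a, hp.1⟩ ⟨p, hp.2.2⟩

theorem injRep_out (hQ : Acyclic t h) (S : Finset V) (j i : V) (hi : i ∉ S) :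
    Function.Surjective (outPi (injRep K hQ S j) i) := by
  intro g
  let f : (injRep K hQ S j).sp i := fun q => injO hQ S j i g q.1 q.2
  refine ⟨f, ?_⟩
  funext a
  obtain ⟨a, rfl⟩ := a
  funext p
  exact (injRep_map (K := K) hQ S j a f p hi).trans rfl

theorem outMap_mor {X Y : QuivRep K V A t h} {f : Fam X Y} (hf : Mor f) (i : V) (a : A)
    (e : t a = i) (x : X.sp i) : f (h a) (outMap X i a e x) = outMap Y i a e (f i x) := by
  subst e
  exact hf a x

theorem out_quot {X Y : QuivRep K V A t h} {f : Fam X Y} (hf : Mor f)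
    (hs : ∀ i, Function.Surjective (f i)) (i : V) (H : Function.Surjective (outPi X i)) :
    Function.Surjective (outPi Y i) := by
  intro g
  choose g' hg' using fun a : {a // t a = i} => hs (h a.1) (g a)
  obtain ⟨x, hx⟩ := H g'
  refine ⟨f i x, ?_⟩
  funext a
  rw [← hg', ← hx]
  exact (outMap_mor hf i a.1 a.2 x).symm

theorem finrank_outPi (Z : QuivRep K V A t h) (i : V) :
    Module.finrank K (∀ a : {a // t a = i}, Z.sp (h a.1)) =
      ∑ a : {a // t a = i}, Z.dimVec (h a.1) := by
  rw [Module.finrank_pi_fintype]; rfl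

theorem out_surj_dim {Z : QuivRep K V A t h} {i : V} (H : Function.Surjective (outPi Z i)) :
    ∑ a : {a // t a = i}, Z.dimVec (h a.1) ≤ Z.dimVec i := by
  rw [← finrank_outPi]
  exact LinearMap.finrank_le_finrank_of_surjective H

theorem out_inj_dim {Z : QuivRep K V A t h} {i : V} (H : Function.Injective (outPi Z i)) :
    Z.dimVec i ≤ ∑ a : {a // t a = i}, Z.dimVec (h a.1) := by
  rw [← finrank_outPi]
  exact LinearMap.finrank_le_finrank_of_injective H

theorem euler_out {R : Type} [CommRing R] (x y : V → R) :
    eulerForm t h x y = ∑ i, x i * (y i - ∑ a : {a // t a = i}, y (h a.1)) := by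
  unfold eulerForm
  rw [← Fintype.sum_fiberwise t (fun a => x (t a) * y (h a)), ← Finset.sum_sub_distrib]
  refine Finset.sum_congr rfl fun i _ => ?_
  rw [mul_sub, Finset.mul_sum]
  congr 1
  refine Finset.sum_congr rfl fun a _ => ?_
  rw [a.2]

theorem euler_in {R : Type} [CommRing R] (x y : V → R) :
    eulerForm t h x y = ∑ i, (x i - ∑ a : {a // h a = i}, x (t a.1)) * y i := by
  unfold eulerForm
  rw [← Fintype.sum_fiberwise h (fun a => x (t a) * y (h a)), ← Finset.sum_sub_distrib]
  refine Finset.sum_congr rfl fun i _ => ?_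
  rw [sub_mul, Finset.sum_mul]
  congr 1
  refine Finset.sum_congr rfl fun a _ => ?_
  rw [a.2]

theorem injRep_dim (hQ : Acyclic t h) (S : Finset V) (j i : V) :
    (injRep K hQ S j).dimVec i = Nat.card {p // GP t h S j i p} := by
  have := gp_finite hQ S j i
  have := Fintype.ofFinite {p // GP t h S j i p}
  rw [Nat.card_eq_fintype_card]
  exact Module.finrank_fintype_fun_eq_card K

def gpEquiv (S : Finset V) (j i : V) (hi : i ∉ S) : {p // GP t h S j i p} ≃
    (PLift (i = j) ⊕ (Σ a : {a // t a = i}, {p // GP t h S j (h a.1) p})) where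
  toFun p := match p with
    | ⟨[], hp⟩ => Sum.inl ⟨hp.1⟩
    | ⟨a :: p, hp⟩ => Sum.inr ⟨⟨a, hp.1⟩, ⟨p, hp.2.2⟩⟩
  invFun q := match q with
    | Sum.inl e => ⟨[], e.down, hi⟩
    | Sum.inr ⟨a, p⟩ => ⟨a.1 :: p.1, a.2, hi, p.2⟩
  left_inv p := by
    rcases p with ⟨_ | ⟨a, p⟩, hp⟩ <;> rfl
  right_inv q := by
    rcases q with e | ⟨a, p⟩ <;> rfl

theorem gp_card (hQ : Acyclic t h) (S : Finset V) (j i : V) (hi : i ∉ S) :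
    Nat.card {p // GP t h S j i p} = (if i = j then 1 else 0) +
      ∑ a : {a // t a = i}, Nat.card {p // GP t h S j (h a.1) p} := by
  have := fun i => gp_finite hQ S j i
  rw [Nat.card_congr (gpEquiv S j i hi), Nat.card_sum, Nat.card_sigma]
  congr 1
  split_ifs with e
  · have : Unique (PLift (i = j)) := ⟨⟨⟨e⟩⟩, fun _ => rfl⟩
    exact Nat.card_unique
  · have : IsEmpty (PLift (i = j)) := ⟨fun x => e x.down⟩
    exact Nat.card_of_isEmpty

theorem injRep_pr (hQ : Acyclic t h) {S : Finset V} {j : V} (hj : j ∉ S) (x : V → ℚ)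
    (hx : ∀ i ∈ S, x i = 0) : pr x (injRep K hQ S j) = x j := by
  unfold pr
  rw [euler_out, Finset.sum_eq_single j]
  · simp only [natQ, injRep_dim]
    rw [gp_card hQ S j j hj]
    push_cast
    simp
  · intro i _ hij
    by_cases hi : i ∈ S
    · rw [hx i hi, zero_mul]
    · simp only [natQ, injRep_dim]
      rw [gp_card hQ S j i hi]
      push_cast
      simp [hij]
  · simp

theorem gamma_eq (hQ : Acyclic t h) (i j : V) :
    gammaRoot t h i j = Nat.card {p // GP t h ∅ j i p} := by
  unfold gammaRoot
  have : {p | IsPathFrom t h i p j} = {p | GP t h ∅ j i p} := by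
    ext p
    exact ⟨gp_empty, gp_path⟩
  rw [this]
  rfl

theorem gamma_pr (hQ : Acyclic t h) (i : V) (y : V → ℚ) :
    eulerForm t h (natQ (gammaRoot t h i)) y = y i := by
  let E : Matrix V V ℚ := fun i k => (if i = k then 1 else 0) -
    ∑ a : {a // t a = i}, if h a.1 = k then 1 else 0
  let N : Matrix V V ℚ := fun i j => (gammaRoot t h i j : ℚ)
  have hE : ∀ (x y : V → ℚ), eulerForm t h x y = ∑ i, x i * ∑ k, E i k * y k := by
    intro x y
    rw [euler_out]
    refine Finset.sum_congr rfl fun i _ => ?_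
    congr 1
    simp only [E, sub_mul, Finset.sum_sub_distrib, Finset.sum_mul, ite_mul, one_mul, zero_mul]
    rw [Finset.sum_comm]
    simp
  have h1 : E * N = 1 := by
    ext i j
    rw [Matrix.mul_apply]
    have := injRep_pr (K := ℚ) hQ (S := ∅) (j := j) (by simp) (Pi.single i 1) (by simp)
    unfold pr at this
    rw [hE] at this
    simp only [natQ, injRep_dim, ← gamma_eq hQ] at this
    rw [Finset.sum_eq_single i] at this
    · simp only [Pi.single_eq_same, one_mul] at this
      rw [show (∑ k, E i k * N k j) = ∑ k, E i k * (gammaRoot t h k j : ℚ) from rfl, this,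
        Matrix.one_apply, Pi.single_apply]
      simp [eq_comm]
    · intro k _ hk
      simp [Pi.single_apply, hk]
    · simp
  have h2 : N * E = 1 := mul_eq_one_comm.1 h1
  rw [hE]
  simp only [natQ, Finset.mul_sum]
  rw [Finset.sum_comm]
  have h3 : ∀ k, ∑ x, (gammaRoot t h i x : ℚ) * (E x k * y k) = (1 : Matrix V V ℚ) i k * y k := by
    intro k
    rw [← h2, Matrix.mul_apply, Finset.sum_mul]
    refine Finset.sum_congr rfl fun x _ => ?_
    simp [N, mul_assoc]
  simp only [h3, Matrix.one_apply]
  simp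

theorem euler_nondeg (hQ : Acyclic t h) (z : V → ℚ) (H : ∀ y, eulerForm t h z y = 0) : z = 0 := by
  funext j
  have := injRep_pr (K := ℚ) hQ (S := ∅) (j := j) (by simp) z (by simp)
  rw [← this]
  exact H _

end QX

namespace QX
open QuivRep
open Polynomial (X C)
variable {K : Type} [Field K] {V A : Type} [Fintype V] [DecidableEq V] [Fintype A] {t h : A → V}

/-- evaluation of a vector of polynomials -/
def evv (c : K) (n : ℕ) : (Fin n → Polynomial K) →ₗ[K] (Fin n → K) :=
  LinearMap.pi fun k => (Polynomial.leval c).comp (LinearMap.proj k)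

theorem evv_apply (c : K) (n : ℕ) (v : Fin n → Polynomial K) (k : Fin n) :
    evv c n v k = (v k).eval c := rfl

theorem evv_mulVec (c : K) {m n : ℕ} (F : Matrix (Fin m) (Fin n) (Polynomial K))
    (v : Fin n → Polynomial K) :
    evv c m (F.mulVec v) = (F.map (Polynomial.eval c)).mulVec (evv c n v) := by
  funext k
  simp [evv_apply, Matrix.mulVec, dotProduct, Polynomial.eval_finsetSum]

/-- evaluation of a submodule -/
def evN (c : K) {n : ℕ} (N : Submodule (Polynomial K) (Fin n → Polynomial K)) :
    Submodule K (Fin n → K) := (N.restrictScalars K).map (evv c n)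

theorem evN_le (c : K) {n : ℕ} (N : Submodule (Polynomial K) (Fin n → Polynomial K)) :
    Module.finrank K (evN c N) ≤ Module.finrank (Polynomial K) N := by
  let b := Module.finBasis (Polynomial K) N
  have h1 : evN c N ≤ Submodule.span K (Set.range fun k => evv c n (b k : Fin n → Polynomial K)) := by
    rintro _ ⟨v, hv0, rfl⟩
    have hv : v ∈ N := hv0
    have h2 := b.sum_repr ⟨v, hv⟩
    have h3 : v = ∑ k, b.repr ⟨v, hv⟩ k • (b k : Fin n → Polynomial K) := by
      have := congrArg Subtype.val h2
      refine this.symm.trans ?_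
      simp only [Submodule.coe_sum, Submodule.coe_smul]
    rw [h3, map_sum]
    refine Submodule.sum_mem _ fun k _ => ?_
    have : evv c n (b.repr ⟨v, hv⟩ k • (b k : Fin n → Polynomial K)) =
        (b.repr ⟨v, hv⟩ k).eval c • evv c n (b k : Fin n → Polynomial K) := by
      funext l
      simp [evv_apply]
    rw [this]
    exact Submodule.smul_mem _ _ (Submodule.subset_span ⟨k, rfl⟩)
  refine (Submodule.finrank_mono h1).trans ?_
  refine (finrank_range_le_card _).trans ?_
  simp

theorem evN_eq (c : K) {m n : ℕ} (F : (Fin n → Polynomial K) →ₗ[Polynomial K] (Fin m → Polynomial K)) :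
    Module.finrank K (evN c (LinearMap.ker F)) = Module.finrank (Polynomial K) (LinearMap.ker F) := by
  obtain ⟨g, hg⟩ := Module.projective_lifting_property F.rangeRestrict LinearMap.id
    F.surjective_rangeRestrict
  have hgi : Function.Injective g := by
    intro x y hxy
    have := congrArg F.rangeRestrict hxy
    rwa [← LinearMap.comp_apply, ← LinearMap.comp_apply, hg] at this
  have hco : evN c (LinearMap.ker F) ⊔ evN c (LinearMap.range g) = ⊤ := by
    rw [eq_top_iff]
    intro w _
    let v : Fin n → Polynomial K := fun k => C (w k)
    have hw : w = evv c n v := by funext k; simp [evv_apply, v]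
    have hv : v = (v - g (F.rangeRestrict v)) + g (F.rangeRestrict v) := by abel
    rw [hw, hv, map_add]
    refine Submodule.add_mem_sup ⟨_, ?_, rfl⟩ ⟨_, ⟨_, rfl⟩, rfl⟩
    change F _ = 0
    have := LinearMap.congr_fun hg (F.rangeRestrict v)
    have h2 := congrArg Subtype.val this
    rw [map_sub]
    simp only [LinearMap.comp_apply, LinearMap.id_apply, LinearMap.codRestrict_apply,
      LinearMap.rangeRestrict, LinearMap.codRestrict] at h2 ⊢
    exact sub_eq_zero.2 h2.symm
  have h1 := evN_le c (LinearMap.ker F)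
  have h2 := evN_le c (LinearMap.range g)
  have h3 := Submodule.finrank_add_le_finrank_add_finrank (evN c (LinearMap.ker F))
    (evN c (LinearMap.range g))
  rw [hco, finrank_top, Module.finrank_fin_fun] at h3
  have h4 : Module.finrank (Polynomial K) (LinearMap.range g) =
      Module.finrank (Polynomial K) (LinearMap.range F) :=
    LinearMap.finrank_range_of_inj hgi
  have h5 := Submodule.finrank_quotient_add_finrank (LinearMap.ker F)
  rw [LinearEquiv.finrank_eq F.quotKerEquivRange] at h5
  rw [Module.finrank_fin_fun] at h5
  omega

theorem evN_const (c : K) {n : ℕ} (P : Matrix (Fin n) (Fin n) K) :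
    evN c (LinearMap.ker (P.map C).mulVecLin) = LinearMap.ker P.mulVecLin := by
  ext w
  constructor
  · rintro ⟨v, hv, rfl⟩
    have hv' : (P.map C).mulVec v = 0 := hv
    have h1 := evv_mulVec c (P.map C) v
    rw [hv', map_zero] at h1
    have : (P.map C).map (Polynomial.eval c) = P := by ext; simp
    rw [this] at h1
    exact h1.symm
  · intro hw
    have hw' : P.mulVec w = 0 := hw
    refine ⟨fun k => C (w k), ?_, by funext k; simp [evv_apply]⟩
    change (P.map C).mulVec (fun k => C (w k)) = 0
    have := RingHom.map_mulVec (C : K →+* Polynomial K) P w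
    funext k
    refine (this k).symm.trans ?_
    rw [hw']
    simp

theorem coeff_mulVec {m n : ℕ} (P : Matrix (Fin m) (Fin n) K) (v : Fin n → Polynomial K) (k : ℕ) :
    (fun i => ((P.map C).mulVec v i).coeff k) = P.mulVec fun j => (v j).coeff k := by
  funext i
  simp [Matrix.mulVec, dotProduct, Polynomial.finsetSum_coeff]

theorem rank_adj {n : ℕ} (P : Matrix (Fin n) (Fin n) K) (φ : Matrix (Fin n) (Fin n) (Polynomial K))
    (hd : φ.det ≠ 0) :
    Module.finrank (Polynomial K) (LinearMap.ker (P.map C * φ.adjugate).mulVecLin) =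
    Module.finrank (Polynomial K) (LinearMap.ker (P.map C).mulVecLin) := by
  have hinj : ∀ v, φ.det • v = 0 → v = (0 : Fin n → Polynomial K) := by
    intro v hv
    exact (smul_eq_zero.1 hv).resolve_left hd
  apply le_antisymm
  · let f : LinearMap.ker (P.map C * φ.adjugate).mulVecLin →ₗ[Polynomial K]
        LinearMap.ker (P.map C).mulVecLin :=
      LinearMap.restrict φ.adjugate.mulVecLin (by
        intro v hv
        have hv' : (P.map C * φ.adjugate).mulVec v = 0 := hv
        rw [← Matrix.mulVec_mulVec] at hv'
        exact hv')
    refine LinearMap.finrank_le_finrank_of_injective (f := f) ?_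
    rw [← LinearMap.ker_eq_bot, LinearMap.ker_eq_bot']
    rintro ⟨v, hv⟩ hf
    have h1 : φ.adjugate.mulVec v = 0 := congrArg Subtype.val hf
    have h2 : φ.mulVec (φ.adjugate.mulVec v) = 0 := by rw [h1, Matrix.mulVec_zero]
    rw [Matrix.mulVec_mulVec, Matrix.mul_adjugate, Matrix.smul_mulVec, Matrix.one_mulVec] at h2
    exact Subtype.ext (hinj v h2)
  · let f : LinearMap.ker (P.map C).mulVecLin →ₗ[Polynomial K]
        LinearMap.ker (P.map C * φ.adjugate).mulVecLin :=
      LinearMap.restrict φ.mulVecLin (by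
        intro v hv
        have hv' : (P.map C).mulVec v = 0 := hv
        change (P.map C * φ.adjugate).mulVec (φ.mulVec v) = 0
        rw [Matrix.mulVec_mulVec, Matrix.mul_assoc, Matrix.adjugate_mul, Matrix.mul_smul,
          Matrix.mul_one, Matrix.smul_mulVec, hv', smul_zero])
    refine LinearMap.finrank_le_finrank_of_injective (f := f) ?_
    rw [← LinearMap.ker_eq_bot, LinearMap.ker_eq_bot']
    rintro ⟨v, hv⟩ hf
    have h1 : φ.mulVec v = 0 := congrArg Subtype.val hf
    have h2 : φ.adjugate.mulVec (φ.mulVec v) = 0 := by rw [h1, Matrix.mulVec_zero]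
    rw [Matrix.mulVec_mulVec, Matrix.adjugate_mul, Matrix.smul_mulVec, Matrix.one_mulVec] at h2
    exact Subtype.ext (hinj v h2)

theorem deg_matrix (n : V → ℕ) (Bm Mm : ∀ a : A, Matrix (Fin (n (h a))) (Fin (n (t a))) K)
    (P : ∀ i, Matrix (Fin (n i)) (Fin (n i)) K)
    (hP : ∀ a x, (P (t a)).mulVec x = 0 → (P (h a)).mulVec ((Bm a).mulVec x) = 0)
    (φ : ∀ i, Matrix (Fin (n i)) (Fin (n i)) (Polynomial K))
    (hφ : ∀ a, φ (h a) * (Bm a).map C =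
      ((Bm a).map C + (X : Polynomial K) • (Mm a - Bm a).map C) * φ (t a))
    (hd : ∀ i, (φ i).det ≠ 0) :
    ∃ U : ∀ i, Submodule K (Fin (n i) → K),
      (∀ a, ∀ x ∈ U (t a), (Mm a).mulVec x ∈ U (h a)) ∧
      ∀ i, Module.finrank K (U i) = Module.finrank K (LinearMap.ker (P i).mulVecLin) := by
  refine ⟨fun i => evN 1 (LinearMap.ker ((P i).map C * (φ i).adjugate).mulVecLin), ?_, ?_⟩
  · rintro a _ ⟨v, hv, rfl⟩
    let Ms := (Bm a).map C + (X : Polynomial K) • (Mm a - Bm a).map C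
    refine ⟨Ms.mulVec v, ?_, ?_⟩
    · have hv' : ((P (t a)).map C * (φ (t a)).adjugate).mulVec v = 0 := hv
      change ((P (h a)).map C * (φ (h a)).adjugate).mulVec (Ms.mulVec v) = 0
      set w := (φ (t a)).adjugate.mulVec v with hw
      rw [← Matrix.mulVec_mulVec, ← hw] at hv'
      have key : (φ (t a)).det • ((φ (h a)).adjugate * Ms) =
          (φ (h a)).det • ((Bm a).map C * (φ (t a)).adjugate) := by
        calc (φ (t a)).det • ((φ (h a)).adjugate * Ms)
            = (φ (h a)).adjugate * Ms * ((φ (t a)) * (φ (t a)).adjugate) := by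
              rw [Matrix.mul_adjugate, Matrix.mul_smul, Matrix.mul_one]
          _ = (φ (h a)).adjugate * (Ms * (φ (t a))) * (φ (t a)).adjugate := by
              simp only [Matrix.mul_assoc]
          _ = ((φ (h a)).adjugate * φ (h a)) * ((Bm a).map C * (φ (t a)).adjugate) := by
              rw [← hφ a]; simp only [Matrix.mul_assoc]
          _ = _ := by rw [Matrix.adjugate_mul, Matrix.smul_mul, Matrix.one_mul]
      have hzero : ((P (h a)).map C).mulVec (((Bm a).map C).mulVec w) = 0 := by
        funext i
        apply Polynomial.ext
        intro k
        have h1 : (P (t a)).mulVec (fun j => (w j).coeff k) = 0 := by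
          rw [← coeff_mulVec, hv']
          funext j; simp
        have h2 := hP a _ h1
        rw [← coeff_mulVec, ← coeff_mulVec] at h2
        exact (congrFun h2 i).trans (by simp)
      have h3 : (φ (t a)).det • ((P (h a)).map C * (φ (h a)).adjugate).mulVec (Ms.mulVec v) = 0 := by
        rw [Matrix.mulVec_mulVec, ← Matrix.smul_mulVec, Matrix.mul_assoc, ← Matrix.mul_smul, key,
          Matrix.mul_smul, Matrix.smul_mulVec, ← Matrix.mulVec_mulVec, ← Matrix.mulVec_mulVec,
          ← hw, hzero, smul_zero]
      exact (smul_eq_zero.1 h3).resolve_left (hd _)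
    · rw [evv_mulVec]
      congr 1
      ext i j
      simp [Ms]
  · intro i
    change Module.finrank K (evN 1 (LinearMap.ker ((P i).map C * (φ i).adjugate).mulVecLin)) = _
    rw [evN_eq, rank_adj _ _ (hd i), ← evN_eq 1, evN_const]

end QX

namespace QX
open QuivRep
open Polynomial (X C)
variable {K : Type} [Field K] {V A : Type} [Fintype V] [DecidableEq V] [Fintype A] {t h : A → V}

theorem coeff_divX_iter (q : Polynomial K) (j n : ℕ) :
    ((Polynomial.divX)^[j] q).coeff n = q.coeff (n + j) := by
  induction j generalizing n with
  | zero => rfl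
  | succ j ih =>
    rw [Function.iterate_succ_apply', Polynomial.coeff_divX, ih]
    congr 1; omega

theorem pencil_seq {E G : Type} [AddCommGroup E] [Module K E] [FiniteDimensional K E]
    [AddCommGroup G] [Module K G] (D Cm : E →ₗ[K] G) (hD : Function.Surjective D)
    (e : E) (he : D e = 0) :
    ∃ (d : ℕ) (p : ℕ → E), p 0 = e ∧ p d = 0 ∧ ∀ k < d, D (p (k + 1)) = - Cm (p k) := by
  obtain ⟨r, hr⟩ := D.exists_rightInverse_of_surjective (LinearMap.range_eq_top.2 hD)
  let T : Module.End K E := - (r.comp Cm)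
  have hT : ∀ x, D (T x) = - Cm x := by
    intro x
    have := LinearMap.congr_fun hr (Cm x)
    simp only [LinearMap.comp_apply, LinearMap.id_apply] at this
    simp [T, this]
  have hIntg : IsIntegral K T := Algebra.IsIntegral.isIntegral T
  let q := minpoly K T
  have hq : q.Monic := minpoly.monic hIntg
  let d := q.natDegree
  refine ⟨d, fun k => Polynomial.aeval T ((Polynomial.divX)^[d - k] q) e, ?_, ?_, ?_⟩
  · have : (Polynomial.divX)^[d - 0] q = 1 := by
      ext n
      rw [coeff_divX_iter, Polynomial.coeff_one]
      split_ifs with hn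
      · subst hn
        simpa [d] using hq.coeff_natDegree
      · exact Polynomial.coeff_eq_zero_of_natDegree_lt (by simp [d]; omega)
    simp only [this]
    simp
  · simp [q, minpoly.aeval]
  · intro k hk
    have h1 : d - k = (d - (k + 1)) + 1 := by omega
    have h2 : (Polynomial.divX)^[d - k] q = Polynomial.divX ((Polynomial.divX)^[d - (k + 1)] q) := by
      rw [h1, Function.iterate_succ_apply']
    have h3 := Polynomial.X_mul_divX_add ((Polynomial.divX)^[d - (k + 1)] q)
    rw [← h2] at h3
    simp only
    rw [← h3]
    simp only [map_add, map_mul, Polynomial.aeval_X, Polynomial.aeval_C, LinearMap.add_apply,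
      Module.End.mul_apply, hT, Module.algebraMap_end_apply, map_smul, he, smul_zero, add_zero]

/-- subrepresentations of a rigid representation embed generically -/
theorem rigid_embeds {B : QuivRep K V A t h} (hB : ExtZ B B) (U : Sub B) :
    Embeds K t h U.dimVec B.dimVec := by
  intro M hM
  have e : ∀ i, B.sp i ≃ₗ[K] M.sp i := fun i =>
    LinearEquiv.ofFinrankEq _ _ (congrFun hM i).symm
  let M' : ∀ a, B.sp (t a) →ₗ[K] B.sp (h a) := fun a =>
    (e (h a)).symm.toLinearMap.comp ((M.map a).comp (e (t a)).toLinearMap)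
  let Cm : (∀ i, B.sp i →ₗ[K] B.sp i) →ₗ[K] (∀ a, B.sp (t a) →ₗ[K] B.sp (h a)) :=
    { toFun := fun f a => - (M' a - B.map a).comp (f (t a))
      map_add' := by
        intro f g
        funext a
        simp only [Pi.add_apply, LinearMap.comp_add]; abel
      map_smul' := by
        intro c f
        funext a
        simp only [Pi.smul_apply, LinearMap.comp_smul, RingHom.id_apply, smul_neg] }
  have hD : Function.Surjective (dmap B B) := by
    intro ψ
    obtain ⟨φ, hφ⟩ := hB ψ
    refine ⟨φ, ?_⟩
    funext a
    ext x
    exact hφ a x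
  obtain ⟨d, p, hp0, hpd, hp⟩ := pencil_seq (dmap B B) Cm hD (fun i => LinearMap.id) (by
    funext a; simp [dmap])
  let n : V → ℕ := fun i => Module.finrank K (B.sp i)
  let b : ∀ i, Module.Basis (Fin (n i)) K (B.sp i) := fun i => Module.finBasis K (B.sp i)
  let Bm : ∀ a, Matrix (Fin (n (h a))) (Fin (n (t a))) K := fun a =>
    LinearMap.toMatrix (b (t a)) (b (h a)) (B.map a)
  let Mm : ∀ a, Matrix (Fin (n (h a))) (Fin (n (t a))) K := fun a =>
    LinearMap.toMatrix (b (t a)) (b (h a)) (M' a)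
  let pm : ℕ → ∀ i, Matrix (Fin (n i)) (Fin (n i)) K := fun k i =>
    LinearMap.toMatrix (b i) (b i) (p k i)
  have hpm0 : ∀ i, pm 0 i = 1 := by
    intro i
    simp only [pm, hp0, LinearMap.toMatrix_id]
  have hpmd : ∀ i, pm d i = 0 := by
    intro i
    simp only [pm, hpd, Pi.zero_apply, map_zero]
  have hpm : ∀ k < d, ∀ a, pm (k + 1) (h a) * Bm a - Bm a * pm (k + 1) (t a) =
      (Mm a - Bm a) * pm k (t a) := by
    intro k hk a
    have h1 := congrFun (hp k hk) a
    have h2 := congrArg (LinearMap.toMatrix (b (t a)) (b (h a))) h1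
    simp only [dmap, LinearMap.coe_mk, AddHom.coe_mk, Pi.neg_apply, Cm, neg_neg, map_sub,
      LinearMap.toMatrix_comp (b (t a)) (b (h a)) (b (h a)),
      LinearMap.toMatrix_comp (b (t a)) (b (t a)) (b (h a))] at h2
    exact h2
  let φ : ∀ i, Matrix (Fin (n i)) (Fin (n i)) (Polynomial K) := fun i =>
    ∑ k ∈ Finset.range d, (X : Polynomial K) ^ k • (pm k i).map C
  have hS : ∀ i, φ i + (X : Polynomial K) ^ d • (pm d i).map C = (pm 0 i).map C +
      ∑ k ∈ Finset.range d, (X : Polynomial K) ^ (k + 1) • (pm (k + 1) i).map C := by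
    intro i
    change (∑ k ∈ Finset.range d, (X : Polynomial K) ^ k • (pm k i).map C) + _ = _
    rw [← Finset.sum_range_succ (fun k => (X : Polynomial K) ^ k • (pm k i).map C),
      Finset.sum_range_succ']
    simp [add_comm]
  have hS' : ∀ i, φ i = 1 +
      ∑ k ∈ Finset.range d, (X : Polynomial K) ^ (k + 1) • (pm (k + 1) i).map C := by
    intro i
    have := hS i
    rw [hpmd, hpm0] at this
    simpa using this
  have hφ : ∀ a, φ (h a) * (Bm a).map C =
      ((Bm a).map C + (X : Polynomial K) • (Mm a - Bm a).map C) * φ (t a) := by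
    intro a
    have hmap : ∀ k < d, (pm (k + 1) (h a)).map C * (Bm a).map C =
        (Bm a).map C * (pm (k + 1) (t a)).map C + (Mm a - Bm a).map C * (pm k (t a)).map C := by
      intro k hk
      have h1 := hpm k hk a
      rw [sub_eq_iff_eq_add] at h1
      have h2 := congrArg (fun N => N.map (C : K →+* Polynomial K)) h1
      simp only [Matrix.map_mul] at h2
      rw [h2, Matrix.map_add _ (by intros; simp), Matrix.map_mul, Matrix.map_mul, add_comm]
    have e1 : φ (h a) * (Bm a).map C = (Bm a).map C + ∑ k ∈ Finset.range d,
        (X : Polynomial K) ^ (k + 1) • ((pm (k + 1) (h a)).map C * (Bm a).map C) := by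
      rw [hS' (h a), Matrix.add_mul, Matrix.one_mul, Matrix.sum_mul]
      simp only [Matrix.smul_mul]
    have e2 : (Bm a).map C * φ (t a) = (Bm a).map C + ∑ k ∈ Finset.range d,
        (X : Polynomial K) ^ (k + 1) • ((Bm a).map C * (pm (k + 1) (t a)).map C) := by
      rw [hS' (t a), Matrix.mul_add, Matrix.mul_one, Matrix.mul_sum]
      simp only [Matrix.mul_smul]
    have e3 : ((X : Polynomial K) • (Mm a - Bm a).map C) * φ (t a) = ∑ k ∈ Finset.range d,
        (X : Polynomial K) ^ (k + 1) • ((Mm a - Bm a).map C * (pm k (t a)).map C) := by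
      rw [show φ (t a) = ∑ k ∈ Finset.range d, (X : Polynomial K) ^ k • (pm k (t a)).map C from rfl,
        Matrix.mul_sum]
      refine Finset.sum_congr rfl fun k _ => ?_
      rw [Matrix.smul_mul, Matrix.mul_smul, smul_smul, pow_succ']
    rw [Matrix.add_mul, e1, e2, e3, add_assoc, ← Finset.sum_add_distrib]
    congr 1
    refine Finset.sum_congr rfl fun k hk => ?_
    rw [hmap k (Finset.mem_range.1 hk), smul_add]
  have hdet : ∀ i, (φ i).det ≠ 0 := by
    intro i hi
    have h1 := congrArg (Polynomial.evalRingHom (0 : K)) hi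
    rw [RingHom.map_det, map_zero] at h1
    have h2 : (Polynomial.evalRingHom (0 : K)).mapMatrix (φ i) = 1 := by
      rw [hS', map_add, map_one, map_sum, Finset.sum_eq_zero, add_zero]
      intro k _
      ext x y
      simp
    rw [h2, Matrix.det_one] at h1
    exact one_ne_zero h1
  have hf : ∀ i, ∃ f : B.sp i →ₗ[K] B.sp i, LinearMap.ker f = U.sub i := by
    intro i
    obtain ⟨g, hg⟩ := (U.sub i).subtype.exists_leftInverse_of_injective (Submodule.ker_subtype _)
    refine ⟨LinearMap.id - (U.sub i).subtype.comp g, ?_⟩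
    ext x
    rw [LinearMap.mem_ker]
    constructor
    · intro hx
      have : x = g x := by simpa [sub_eq_zero] using hx
      rw [this]; exact (g x).2
    · intro hx
      have := LinearMap.congr_fun hg ⟨x, hx⟩
      simp only [LinearMap.comp_apply, Submodule.subtype_apply, LinearMap.id_apply] at this
      simp [this]
  choose f hf using hf
  let P : ∀ i, Matrix (Fin (n i)) (Fin (n i)) K := fun i => LinearMap.toMatrix (b i) (b i) (f i)
  have hPf : ∀ i (y : B.sp i), (P i).mulVec ((b i).equivFun y) = (b i).equivFun (f i y) := by
    intro i y
    exact LinearMap.toMatrix_mulVec_repr (b i) (b i) (f i) y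
  have hBf : ∀ a (y : B.sp (t a)), (Bm a).mulVec ((b (t a)).equivFun y) =
      (b (h a)).equivFun (B.map a y) := by
    intro a y
    exact LinearMap.toMatrix_mulVec_repr (b (t a)) (b (h a)) (B.map a) y
  have hMf : ∀ a (y : B.sp (t a)), (Mm a).mulVec ((b (t a)).equivFun y) =
      (b (h a)).equivFun (M' a y) := by
    intro a y
    exact LinearMap.toMatrix_mulVec_repr (b (t a)) (b (h a)) (M' a) y
  have hP : ∀ a x, (P (t a)).mulVec x = 0 → (P (h a)).mulVec ((Bm a).mulVec x) = 0 := by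
    intro a x hx
    obtain ⟨y, rfl⟩ := (b (t a)).equivFun.surjective x
    rw [hPf, LinearEquiv.map_eq_zero_iff, ← LinearMap.mem_ker, hf] at hx
    rw [hBf, hPf, LinearEquiv.map_eq_zero_iff, ← LinearMap.mem_ker, hf]
    exact U.le a y hx
  obtain ⟨W, hW1, hW2⟩ := deg_matrix n Bm Mm P hP φ hφ hdet
  refine ⟨⟨fun i => (W i).map ((b i).equivFun.symm ≪≫ₗ e i).toLinearMap, ?_⟩, ?_⟩
  · rintro a _ ⟨x, hx, rfl⟩
    refine ⟨(Mm a).mulVec x, hW1 a x hx, ?_⟩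
    obtain ⟨y, rfl⟩ := (b (t a)).equivFun.surjective x
    rw [hMf]
    simp [M']
  · funext i
    change Module.finrank K ((W i).map ((b i).equivFun.symm ≪≫ₗ e i).toLinearMap) = _
    rw [LinearEquiv.finrank_map_eq, hW2]
    have : (U.sub i).map (b i).equivFun.toLinearMap = LinearMap.ker (P i).mulVecLin := by
      ext x
      obtain ⟨y, rfl⟩ := (b i).equivFun.surjective x
      rw [LinearMap.mem_ker, Matrix.mulVecLin_apply, hPf, LinearEquiv.map_eq_zero_iff,
        ← LinearMap.mem_ker, hf]
      constructor
      · rintro ⟨z, hz, hzy⟩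
        have : z = y := (b i).equivFun.injective hzy
        rw [← this]; exact hz
      · intro hy
        exact ⟨y, hy, rfl⟩
    rw [← this, LinearEquiv.finrank_map_eq]
    rfl

end QX

namespace QX
open QuivRep
variable {K : Type} [Field K] {V A : Type} [Fintype V] [DecidableEq V] [Fintype A] {t h : A → V}

theorem fam_ext {X Y : QuivRep K V A t h} {f g : Fam X Y} (H : ∀ i x, f i x = g i x) : f = g := by
  funext i; ext x; exact H i x

theorem fam_zero {X Y : QuivRep K V A t h} {f : Fam X Y} (H : ∀ i x, f i x = 0) : f = 0 :=
  fam_ext H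

theorem fam_ap {X Y : QuivRep K V A t h} {f : Fam X Y} (H : f = 0) (i : V) (x : X.sp i) :
    f i x = 0 := by rw [H]; rfl

theorem fam_ne {X Y : QuivRep K V A t h} {f : Fam X Y} (H : f ≠ 0) : ∃ i x, f i x ≠ 0 := by
  by_contra hc
  push Not at hc
  exact H (fam_zero hc)

theorem schur_scalar {B : QuivRep K V A t h} (hB : homDim B B = 1) (f : Fam B B) (hf : Mor f) :
    ∃ c : K, ∀ i x, f i x = c • x := by
  obtain ⟨v, hv, hall⟩ := finrank_eq_one_iff'.1 hB
  obtain ⟨c0, hc0⟩ := hall ⟨idF B, (mem_homS_iff _).2 (mor_id B)⟩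
  obtain ⟨c, hc⟩ := hall ⟨f, (mem_homS_iff _).2 hf⟩
  have h0 : ∀ i (x : B.sp i), c0 • v.1 i x = x := by
    intro i x
    have := congrArg Subtype.val hc0
    exact LinearMap.congr_fun (congrFun this i) x
  have h1 : ∀ i (x : B.sp i), c • v.1 i x = f i x := by
    intro i x
    have := congrArg Subtype.val hc
    exact LinearMap.congr_fun (congrFun this i) x
  by_cases hz : c0 = 0
  · refine ⟨0, fun i x => ?_⟩
    have : x = 0 := by rw [← h0 i x, hz, zero_smul]
    rw [this]; simp
  · refine ⟨c * c0⁻¹, fun i x => ?_⟩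
    rw [← h1, mul_smul]
    congr 1
    rw [eq_inv_smul_iff₀ hz, h0]

def inC (B : QuivRep K V A t h) (S : Finset V) (W : QuivRep K V A t h) : Prop :=
  Van S W ∧ HomZ W B ∧ ExtZ W B

def InjC (B : QuivRep K V A t h) (S : Finset V) (M : QuivRep K V A t h) : Prop :=
  ∀ W, inC B S W → ExtZ W M

def inA (B : QuivRep K V A t h) (S : Finset V) (α : V → ℚ) : Prop :=
  (∀ i, 0 ≤ α i) ∧ (∀ i ∈ S, α i = 0) ∧ pr α B = 0 ∧
    ∀ U : Sub B, eulerForm t h α (natQ U.dimVec) ≤ 0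

def inL (B : QuivRep K V A t h) (S : Finset V) (x : V → ℚ) : Prop :=
  (∀ i ∈ S, x i = 0) ∧ pr x B = 0

theorem inA.toL {B : QuivRep K V A t h} {S : Finset V} {α : V → ℚ} (H : inA B S α) : inL B S α :=
  ⟨H.2.1, H.2.2.1⟩

def Pos (B : QuivRep K V A t h) (S : Finset V) (M : QuivRep K V A t h) : Prop :=
  ∀ (Z : QuivRep K V A t h) (g : Fam M Z), Mor g → (∀ i, Function.Surjective (g i)) →
    ∀ α, inA B S α → 0 ≤ pr α Z

theorem Pos.quot {B : QuivRep K V A t h} {S : Finset V} {M Q : QuivRep K V A t h}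
    (H : Pos B S M) (g : Fam M Q) (hg : Mor g) (hs : ∀ i, Function.Surjective (g i)) :
    Pos B S Q := by
  intro Z g' hg' hs' α hα
  exact H Z (fcomp g' g) (hg'.comp hg) (fun i => (hs' i).comp (hs i)) α hα

theorem Pos.self {B : QuivRep K V A t h} {S : Finset V} {M : QuivRep K V A t h}
    (H : Pos B S M) {α : V → ℚ} (hα : inA B S α) : 0 ≤ pr α M :=
  H M (idF M) (mor_id M) (fun i => Function.surjective_id) α hα

theorem pos_injRep (hQ : Acyclic t h) (B : QuivRep K V A t h) (S S' : Finset V)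
    (hS : ∀ α, inA B S α → ∀ i ∈ S', α i = 0) (j : V) : Pos B S (injRep K hQ S' j) := by
  intro Z g hg hs α hα
  unfold pr
  rw [euler_out]
  refine Finset.sum_nonneg fun i _ => ?_
  by_cases hi : i ∈ S'
  · rw [hS α hα i hi, zero_mul]
  · refine mul_nonneg (hα.1 i) ?_
    have h1 := out_surj_dim (out_quot hg hs i (injRep_out hQ S' j i hi))
    have h2 : ((∑ a : {a // t a = i}, Z.dimVec (h a.1) : ℕ) : ℚ) ≤ (Z.dimVec i : ℚ) := by
      exact_mod_cast h1
    push_cast at h2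
    simp only [natQ]
    linarith

theorem Pos.ext {B : QuivRep K V A t h} {S : Finset V} {M M1 : QuivRep K V A t h}
    (s : SES B M1 M) (H : Pos B S M) : Pos B S M1 := by
  intro Z g hg hs α hα
  let f := fcomp g s.f
  have hf : Mor f := hg.comp s.mf
  let U := imSub f hf
  have h1 := (sesKer f hf).pr_eq α
  have h2 := (sesSub Z U).pr_eq α
  have h3 : pr α (subRep B (kerSub (toIm f hf) (toIm_mor f hf))) ≤ 0 := hα.2.2.2 _
  obtain ⟨q, hq, hqe⟩ := s.mor_descL (fcomp (sesSub Z U).g g) ((sesSub Z U).mg.comp hg) (by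
    intro i x
    exact ((sesSub Z U).ex i _).2 ⟨⟨g i (s.f i x), ⟨x, rfl⟩⟩, rfl⟩)
  have h4 := H _ q hq (fun i => by
    intro z
    obtain ⟨y, hy⟩ := (sesSub Z U).surj i z
    obtain ⟨x, hx⟩ := hs i y
    refine ⟨s.g i x, ?_⟩
    rw [hqe, ← hy, ← hx]
    rfl) α hα
  rw [hα.2.2.1] at h1
  rw [h2]
  have h5 : 0 ≤ pr α (subRep Z U) := by
    have : pr α (subRep Z (imSub f hf)) = pr α (subRep Z U) := rfl
    linarith
  linarith

/-- extension representation -/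
def extRep (B M : QuivRep K V A t h) (ψ : ∀ a, M.sp (t a) →ₗ[K] B.sp (h a)) :
    QuivRep K V A t h where
  sp i := B.sp i × M.sp i
  map a := LinearMap.prod ((B.map a).comp (LinearMap.fst K _ _) + (ψ a).comp (LinearMap.snd K _ _))
    ((M.map a).comp (LinearMap.snd K _ _))

def sesExt (B M : QuivRep K V A t h) (ψ : ∀ a, M.sp (t a) →ₗ[K] B.sp (h a)) :
    SES B (extRep B M ψ) M where
  f i := LinearMap.inl K (B.sp i) (M.sp i)
  g i := LinearMap.snd K (B.sp i) (M.sp i)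
  mf a x := by
    change ((B.map a x, 0) : B.sp (h a) × M.sp (h a)) = (B.map a x + ψ a 0, M.map a 0)
    simp
  mg a x := rfl
  inj i := LinearMap.inl_injective
  surj i := LinearMap.snd_surjective
  ex i x := by
    obtain ⟨b, m⟩ := x
    constructor
    · intro hm
      have hm' : m = 0 := hm
      exact ⟨b, by rw [hm']; rfl⟩
    · rintro ⟨y, hy⟩
      exact (congrArg Prod.snd hy).symm

structure App (B : QuivRep K V A t h) (S : Finset V) (j : V) (M : QuivRep K V A t h) : Prop where
  van : Van S M
  hom : HomZ M B
  inj : InjC B S M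
  pos : Pos B S M
  prx : ∀ x, inL B S x → pr x M = x j
  nz : ∀ W, inC B S W → (∃ x : W.sp j, x ≠ 0) → ∃ f : Fam W M, Mor f ∧ f ≠ 0

theorem app_step {B : QuivRep K V A t h} (hB1 : homDim B B = 1) (hB2 : ExtZ B B) {S : Finset V}
    (hBS : Van S B) {j : V} (n : ℕ) : ∀ M, App B S j M → extDim M B = n →
      ∃ M', App B S j M' ∧ ExtZ M' B := by
  induction n with
  | zero => exact fun M H hn => ⟨M, H, extZ_iff.2 hn⟩
  | succ n ih =>
    intro M H hn
    have hne : ¬ ExtZ M B := by rw [extZ_iff]; omega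
    unfold ExtZ at hne
    push Not at hne
    obtain ⟨ψ, hψ⟩ := hne
    let s := sesExt B M ψ
    have hhom : HomZ (extRep B M ψ) B := by
      intro f hf
      obtain ⟨c, hc⟩ := schur_scalar hB1 (fcomp f s.f) (hf.comp s.mf)
      by_cases hc0 : c = 0
      · obtain ⟨q, hq, hqe⟩ := s.mor_descL f hf (by
          intro i x
          have := hc i x
          rw [hc0, zero_smul] at this
          exact this)
        have hq0 := H.hom q hq
        apply fam_zero
        intro i x
        rw [← hqe, hq0]; rfl
      · exfalso
        let f2 : Fam M B := fun i => (f i).comp (LinearMap.inr K (B.sp i) (M.sp i))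
        obtain ⟨a, x, hax⟩ := hψ (-c⁻¹ • f2)
        apply hax
        have h1 := hf a ((0, x) : B.sp (t a) × M.sp (t a))
        have h2 : (extRep B M ψ).map a ((0, x) : B.sp (t a) × M.sp (t a)) =
            s.f (h a) (ψ a x) + (show (extRep B M ψ).sp (h a) from
              ((0, M.map a x) : B.sp (h a) × M.sp (h a))) := by
          refine Prod.ext ?_ ?_
          · change B.map a 0 + ψ a x = ψ a x + 0
            simp
          · change M.map a x = 0 + M.map a x
            simp
        rw [h2, map_add] at h1
        have h3 := hc (h a) (ψ a x)
        change f (h a) (s.f (h a) (ψ a x)) = _ at h3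
        rw [h3] at h1
        change c • ψ a x + f2 (h a) (M.map a x) = B.map a (f2 (t a) x) at h1
        change -c⁻¹ • f2 (h a) (M.map a x) - B.map a (-c⁻¹ • f2 (t a) x) = ψ a x
        rw [map_smul, ← smul_sub, ← h1]
        rw [show f2 (h a) (M.map a x) - (c • ψ a x + f2 (h a) (M.map a x)) = -(c • ψ a x) by abel,
          neg_smul, smul_neg, neg_neg, smul_smul, inv_mul_cancel₀ hc0, one_smul]
    have hprB : ∀ x, inL B S x → pr x (extRep B M ψ) = pr x M := by
      intro x hx
      rw [s.pr_eq x, hx.2, zero_add]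
    refine ih (extRep B M ψ) ⟨s.van_mid hBS H.van, hhom, ?_, H.pos.ext s, ?_, ?_⟩ ?_
    · intro W hW
      exact s.extZ_mid hW.2.2 (H.inj W hW)
    · intro x hx
      rw [hprB x hx, H.prx x hx]
    · intro W hW hWj
      obtain ⟨g, hg, hg0⟩ := H.nz W hW hWj
      obtain ⟨u, hu⟩ := hW.2.2 (fun a => (ψ a).comp (g (t a)))
      refine ⟨fun i => LinearMap.prod (u i) (g i), ?_, ?_⟩
      · intro a x
        have := hu a x
        change ((u (h a) (W.map a x), g (h a) (W.map a x)) : B.sp (h a) × M.sp (h a)) =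
          (B.map a (u (t a) x) + ψ a (g (t a) x), M.map a (g (t a) x))
        rw [hg a x]
        congr 1
        rw [sub_eq_iff_eq_add] at this
        rw [this, add_comm]; rfl
      · intro h0
        obtain ⟨i, x, hix⟩ := fam_ne hg0
        have := fam_ap (Y := extRep B M ψ) h0 i x
        exact hix (congrArg Prod.snd this)
    · have e0 := homZ_iff.1 hhom
      have e1 := homZ_iff.1 H.hom
      have e2 := extZ_iff.1 hB2
      have hdim : natQ (extRep B M ψ).dimVec = natQ B.dimVec + natQ M.dimVec := by
        funext i
        simp only [natQ, Pi.add_apply, s.dim_eq i]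
        push_cast; rfl
      have h1 := pr_rep (extRep B M ψ) B
      rw [hdim] at h1
      unfold pr at h1
      rw [euler_add_left] at h1
      have h2 := pr_rep B B
      have h3 := pr_rep M B
      unfold pr at h2 h3
      rw [h2, h3, e0, e1, e2, hB1, hn] at h1
      push_cast at h1
      have : (extDim (extRep B M ψ) B : ℚ) = n := by linarith
      exact_mod_cast this

end QX

namespace QX
open QuivRep
variable {K : Type} [Field K] {V A : Type} [Fintype V] [DecidableEq V] [Fintype A] {t h : A → V}

theorem caseB_inj {B I : QuivRep K V A t h} (hB1 : homDim B B = 1) {S : Finset V}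
    (hBS : Van S B) (hI : ∀ W, Van S W → ExtZ W I) (f : Fam I B) (hf : Mor f) (hf0 : f ≠ 0) :
    ∀ W, Van S W → ExtZ W B := by
  have h1 : ∀ W, Van S W → ExtZ W (subRep B (imSub f hf)) := fun W hW =>
    (sesKer f hf).extZ_quot (hI W hW)
  let sb := sesSub B (imSub f hf)
  obtain ⟨Φ, hΦ, hΦe⟩ := sb.mor_ext (h1 _ (sb.van_quot hBS)) (idF _) (mor_id _)
  obtain ⟨c, hc⟩ := schur_scalar hB1 (fcomp sb.f Φ) (sb.mf.comp hΦ)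
  obtain ⟨i, y, hy⟩ := fam_ne hf0
  have hc1 : c = 1 := by
    have h2 := hc i (f i y)
    have h3 := hΦe i ⟨f i y, ⟨y, rfl⟩⟩
    have h4 : f i y = c • f i y := by
      rw [← h2]
      change _ = sb.f i (Φ i (f i y))
      change Φ i (f i y) = _ at h3
      rw [h3]; rfl
    have h5 : (1 - c) • f i y = 0 := by rw [sub_smul, one_smul, ← h4, sub_self]
    rcases smul_eq_zero.1 h5 with h6 | h6
    · exact (sub_eq_zero.1 h6).symm
    · exact absurd h6 hy
  have hsurj : ∀ i, Function.Surjective (f i) := by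
    intro i x
    have h2 := hc i x
    rw [hc1, one_smul] at h2
    have h3 := (Φ i x).2
    have h4 : ((Φ i x).1 : B.sp i) = x := h2
    obtain ⟨y, hy⟩ := h3
    exact ⟨y, hy.trans h4⟩
  intro W hW
  exact (sesSurj f hf hsurj).extZ_quot (hI W hW)

/-- the subrepresentation spanned by a vector at a sink of the support -/
def spanSub (B : QuivRep K V A t h) (j : V) (x : B.sp j)
    (hj : ∀ a, t a = j → ∀ z : B.sp (h a), z = 0) : Sub B where
  sub i := Submodule.span K {y | (⟨i, y⟩ : Σ i, B.sp i) = ⟨j, x⟩}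
  le a y hy := by
    by_cases ha : t a = j
    · rw [hj a ha (B.map a y)]
      exact Submodule.zero_mem _
    · have : {y : B.sp (t a) | (⟨t a, y⟩ : Σ i, B.sp i) = ⟨j, x⟩} = ∅ := by
        ext z
        simp only [Set.mem_setOf_eq, Set.mem_empty_iff_false, iff_false]
        intro hz
        exact ha (congrArg Sigma.fst hz)
      rw [this, Submodule.span_empty, Submodule.mem_bot] at hy
      rw [hy, map_zero]
      exact Submodule.zero_mem _

theorem spanSub_ne {B : QuivRep K V A t h} {j : V} {x : B.sp j}
    {hj : ∀ a, t a = j → ∀ z : B.sp (h a), z = 0} {i : V} (hi : i ≠ j) {y : B.sp i}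
    (hy : y ∈ (spanSub B j x hj).sub i) : y = 0 := by
  change y ∈ Submodule.span K {y | (⟨i, y⟩ : Σ i, B.sp i) = ⟨j, x⟩} at hy
  have : {y : B.sp i | (⟨i, y⟩ : Σ i, B.sp i) = ⟨j, x⟩} = ∅ := by
    ext z
    simp only [Set.mem_setOf_eq, Set.mem_empty_iff_false, iff_false]
    intro hz
    exact hi (congrArg Sigma.fst hz)
  rwa [this, Submodule.span_empty, Submodule.mem_bot] at hy

theorem spanSub_mem {B : QuivRep K V A t h} {j : V} {x : B.sp j}
    {hj : ∀ a, t a = j → ∀ z : B.sp (h a), z = 0} {y : B.sp j} :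
    y ∈ (spanSub B j x hj).sub j ↔ ∃ c : K, c • x = y := by
  change y ∈ Submodule.span K {y | (⟨j, y⟩ : Σ i, B.sp i) = ⟨j, x⟩} ↔ _
  have : {y : B.sp j | (⟨j, y⟩ : Σ i, B.sp i) = ⟨j, x⟩} = {x} := by
    ext z
    simp
  rw [this, Submodule.mem_span_singleton]

theorem caseB_iso (hQ : Acyclic t h) {B : QuivRep K V A t h} (hB1 : homDim B B = 1) {S : Finset V}
    (hBS : Van S B) (hI : ∀ W, Van S W → ExtZ W B) (hNZ : NZ B) :
    ∃ j, j ∉ S ∧ ∃ (g : Fam B (injRep K hQ S j)) (Φ : Fam (injRep K hQ S j) B), Mor g ∧ Mor Φ ∧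
      (∀ i, Function.Injective (g i)) ∧ (∀ i, Function.Injective (Φ i)) := by
  obtain ⟨j, ⟨x, hx⟩, hmin⟩ := (wf_bwd hQ).has_min {i | ∃ x : B.sp i, x ≠ 0} hNZ
  have hjS : j ∉ S := fun hj => hx (hBS j hj x)
  have hj : ∀ a, t a = j → ∀ z : B.sp (h a), z = 0 := by
    intro a ha z
    by_contra hz
    exact hmin (h a) ⟨z, hz⟩ ⟨a, rfl, ha⟩
  obtain ⟨g, hg, hgx⟩ := injRep_hom hQ hjS hBS x hx
  let sT := sesSub B (spanSub B j x hj)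
  have hinj : ∀ i, Function.Injective (fcomp g sT.f i) := by
    intro i
    rw [injective_iff_map_eq_zero]
    rintro ⟨y, hy⟩ h0
    change g i y = 0 at h0
    apply Subtype.ext
    change y = 0
    by_cases hi : i = j
    · subst hi
      obtain ⟨c, rfl⟩ := spanSub_mem.1 hy
      rw [map_smul] at h0
      rcases smul_eq_zero.1 h0 with h6 | h6
      · rw [h6, zero_smul]
      · exact absurd h6 hgx
    · exact spanSub_ne hi hy
  let s1 := sesInj (fcomp g sT.f) (hg.comp sT.mf) hinj
  obtain ⟨Φ, hΦ, hΦe⟩ := s1.mor_ext (hI _ (s1.van_quot (injRep_van hQ S j))) sT.f sT.mf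
  have hΦx : Φ j (g j x) = x := hΦe j ⟨x, spanSub_mem.2 ⟨1, one_smul _ _⟩⟩
  obtain ⟨c, hc⟩ := schur_scalar hB1 (fcomp Φ g) (hΦ.comp hg)
  have hc1 : c = 1 := by
    have h4 : c • x = x := (hc j x).symm.trans hΦx
    have h5 : (c - 1) • x = 0 := by rw [sub_smul, one_smul, h4, sub_self]
    rcases smul_eq_zero.1 h5 with h6 | h6
    · exact sub_eq_zero.1 h6
    · exact absurd h6 hx
  refine ⟨j, hjS, g, Φ, hg, hΦ, fun i => ?_, ?_⟩
  · rw [injective_iff_map_eq_zero]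
    intro y hy
    have h2 : Φ i (g i y) = c • y := hc i y
    rw [hc1, one_smul, hy, map_zero] at h2
    exact h2.symm
  · have hnil : ∀ q : {p // GP t h S j j p}, q = ⟨[], rfl, hjS⟩ := fun q =>
      Subtype.ext (hQ j q.1 (gp_path q.2))
    have key : ∀ (p : List A) (i : V) (hp : GP t h S j i p) (y : (injRep K hQ S j).sp i),
        Φ i y = 0 → y ⟨p, hp⟩ = 0 := by
      intro p
      induction p with
      | nil =>
        rintro i ⟨rfl, _⟩ y hy
        have hg0 : g i x ⟨[], rfl, hjS⟩ ≠ 0 := by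
          intro h0
          apply hgx
          funext q
          rw [hnil q]; exact h0
        have h1 : y = (y ⟨[], rfl, hjS⟩ / g i x ⟨[], rfl, hjS⟩) • g i x := by
          funext q
          rw [hnil q]
          change _ = (y ⟨[], rfl, hjS⟩ / g i x ⟨[], rfl, hjS⟩) * g i x ⟨[], rfl, hjS⟩
          rw [div_mul_cancel₀ _ hg0]
        rw [h1, map_smul, hΦx] at hy
        rcases smul_eq_zero.1 hy with h6 | h6
        · rcases div_eq_zero_iff.1 h6 with h7 | h7
          · exact h7
          · exact absurd h7 hg0
        · exact absurd h6 hx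
      | cons a p ih =>
        rintro i ⟨rfl, hi, hp⟩ y hy
        have := ih (h a) hp ((injRep K hQ S j).map a y) (by rw [hΦ, hy, map_zero])
        rw [injRep_map hQ S j a _ _ hi] at this
        exact this
    intro i
    rw [injective_iff_map_eq_zero]
    intro y hy
    funext p
    exact key p.1 i p.2 y hy

theorem gp_end {S : Finset V} {j i : V} {p : List A} (H : GP t h S j i p) : j ∉ S := by
  induction p generalizing i with
  | nil => obtain ⟨rfl, hi⟩ := H; exact hi
  | cons a p ih => exact ih H.2.2

theorem nz_of_hom1 {B : QuivRep K V A t h} (hB1 : homDim B B = 1) : NZ B := by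
  by_contra hn
  have : HomZ B B := by
    intro f hf
    apply fam_zero
    intro i x
    have : x = 0 := by
      by_contra hx
      exact hn ⟨i, x, hx⟩
    rw [this, map_zero]
  rw [homZ_iff] at this
  omega

theorem approx (hQ : Acyclic t h) {B : QuivRep K V A t h} (hB1 : homDim B B = 1) (hB2 : ExtZ B B)
    {S : Finset V} (hBS : Van S B) {j : V} (hj : j ∉ S) : ∃ M, App B S j M ∧ ExtZ M B := by
  by_cases hA : HomZ (injRep K hQ S j) B
  · refine app_step hB1 hB2 hBS _ (injRep K hQ S j) ⟨injRep_van hQ S j, hA, ?_, ?_, ?_, ?_⟩ rfl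
    · exact fun W hW => injRep_inj hQ S j hW.1
    · exact pos_injRep hQ B S S (fun α hα => hα.2.1) j
    · exact fun x hx => injRep_pr hQ hj x hx.1
    · rintro W hW ⟨x, hx⟩
      obtain ⟨f, hf, hfx⟩ := injRep_hom hQ hj hW.1 x hx
      exact ⟨f, hf, fun h0 => hfx (fam_ap h0 j x)⟩
  · unfold HomZ at hA
    push Not at hA
    obtain ⟨f, hf, hf0⟩ := hA
    have hBI := caseB_inj hB1 hBS (fun W hW => injRep_inj hQ S j hW) f hf hf0
    obtain ⟨j0, hj0, g, Φ, hg, hΦ, hgi, hΦi⟩ := caseB_iso hQ hB1 hBS hBI (nz_of_hom1 hB1)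
    have hdim : B.dimVec = (injRep K hQ S j0).dimVec := by
      funext i
      exact le_antisymm (LinearMap.finrank_le_finrank_of_injective (hgi i))
        (LinearMap.finrank_le_finrank_of_injective (hΦi i))
    have hL : ∀ x, inL B S x → x j0 = 0 := by
      intro x hx
      rw [← injRep_pr (K := K) hQ hj0 x hx.1]
      unfold pr
      rw [← hdim]
      exact hx.2
    have hL' : ∀ x, inL B S x → ∀ i ∈ insert j0 S, x i = 0 := by
      intro x hx i hi
      rcases Finset.mem_insert.1 hi with rfl | hi
      · exact hL x hx
      · exact hx.1 i hi
    have hW0 : ∀ W, inC B S W → ∀ x : W.sp j0, x = 0 := by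
      intro W hW x
      by_contra hx
      obtain ⟨f, hf, hfx⟩ := injRep_hom hQ hj0 hW.1 x hx
      have := hW.2.1 (fcomp Φ f) (hΦ.comp hf)
      have h2 := fam_ap this j0 x
      apply hfx
      apply hΦi j0
      rw [map_zero]; exact h2
    have hWV : ∀ W, inC B S W → Van (insert j0 S) W := by
      intro W hW i hi x
      rcases Finset.mem_insert.1 hi with rfl | hi
      · exact hW0 W hW x
      · exact hW.1 i hi x
    have hV : Van S (injRep K hQ (insert j0 S) j) := fun i hi x =>
      injRep_van hQ _ j i (Finset.mem_insert_of_mem hi) x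
    refine ⟨injRep K hQ (insert j0 S) j, ⟨hV, ?_, ?_, ?_, ?_, ?_⟩, hBI _ hV⟩
    · intro f hf
      have := injRep_hom_zero hQ (S := S) (j := j0) (X := injRep K hQ (insert j0 S) j)
        (fun x => injRep_van hQ _ j j0 (Finset.mem_insert_self _ _) x) (fcomp g f) (hg.comp hf)
      apply fam_zero
      intro i x
      apply hgi i
      rw [map_zero]
      exact fam_ap this i x
    · exact fun W hW => injRep_inj hQ _ j (hWV W hW)
    · exact pos_injRep hQ B S _ (fun α hα => hL' α hα.toL) j
    · intro x hx
      by_cases hjj : j = j0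
      · rw [hjj, hL x hx]
        have : (injRep K hQ (insert j0 S) j0).dimVec = 0 := by
          funext i
          refine Module.finrank_zero_iff.2 ⟨fun y z => ?_⟩
          funext p
          exact absurd (Finset.mem_insert_self j0 S) (gp_end p.2)
        unfold pr
        rw [this]
        simp [eulerForm, natQ]
      · refine injRep_pr hQ ?_ x (hL' x hx)
        simp [hjj, hj]
    · rintro W hW ⟨x, hx⟩
      have hjj : j ∉ insert j0 S := by
        intro hjm
        exact hx (hWV W hW j hjm x)
      obtain ⟨f, hf, hfx⟩ := injRep_hom hQ hjj (hWV W hW) x hx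
      exact ⟨f, hf, fun h0 => hfx (fam_ap h0 j x)⟩

end QX

namespace QX
open QuivRep
variable {K : Type} [Field K] {V A : Type} [Fintype V] [DecidableEq V] [Fintype A] {t h : A → V}
variable {B : QuivRep K V A t h} {S : Finset V}

theorem inC_im {X Y : QuivRep K V A t h} (hX : inC B S X) (hY : inC B S Y) (f : Fam X Y)
    (hf : Mor f) : inC B S (subRep Y (imSub f hf)) :=
  ⟨(sesSub Y _).van_sub hY.1, (sesKer f hf).homZ_quot hX.2.1, (sesSub Y _).extZ_sub hY.2.2⟩

theorem inC_ker {X Y : QuivRep K V A t h} (hX : inC B S X) (hY : inC B S Y) (f : Fam X Y)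
    (hf : Mor f) : inC B S (subRep X (kerSub (toIm f hf) (toIm_mor f hf))) :=
  ⟨(sesKer f hf).van_sub hX.1, (sesKer f hf).homZ_ker hX.2.1 (inC_im hX hY f hf).2.2,
    (sesKer f hf).extZ_sub hX.2.2⟩

theorem inC_quot {L M Q : QuivRep K V A t h} (s : SES L M Q) (hL : inC B S L) (hM : inC B S M) :
    inC B S Q :=
  ⟨s.van_quot hM.1, s.homZ_quot hM.2.1, s.extZ_coker hL.2.1 hM.2.2⟩

def Simp (B : QuivRep K V A t h) (S : Finset V) (W : QuivRep K V A t h) : Prop :=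
  inC B S W ∧ NZ W ∧ ∀ X, inC B S X → ∀ f : Fam X W, Mor f → f ≠ 0 → ∀ i, Function.Surjective (f i)

theorem Simp.inj {W X : QuivRep K V A t h} (hW : Simp B S W) (hX : inC B S X) (f : Fam W X)
    (hf : Mor f) (h0 : f ≠ 0) : ∀ i, Function.Injective (f i) := by
  have hk := inC_ker hW.1 hX f hf
  intro i
  rw [injective_iff_map_eq_zero]
  intro x hx
  by_contra hx0
  have h1 := hW.2.2 _ hk (sesKer f hf).f (sesKer f hf).mf (by
    intro hz
    have h2 := fam_ap hz i ⟨x, Subtype.ext hx⟩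
    exact hx0 h2)
  apply h0
  apply fam_zero
  intro k y
  obtain ⟨z, rfl⟩ := h1 k y
  exact congrArg Subtype.val ((sesKer f hf).gf k z)

theorem im_nz {X Y : QuivRep K V A t h} {f : Fam X Y} (hf : Mor f) (h0 : f ≠ 0) :
    NZ (subRep Y (imSub f hf)) := by
  obtain ⟨i, x, hx⟩ := fam_ne h0
  refine ⟨i, ⟨f i x, ⟨x, rfl⟩⟩, fun hz => hx ?_⟩
  exact congrArg Subtype.val hz

theorem exists_simp (n : ℕ) : ∀ M : QuivRep K V A t h, inC B S M → NZ M → td M = n →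
    ∃ W, Simp B S W ∧ ∃ f : Fam W M, Mor f ∧ ∀ i, Function.Injective (f i) := by
  induction n using Nat.strong_induction_on with
  | _ n ih =>
    intro M hM hNZ hn
    by_cases hs : Simp B S M
    · exact ⟨M, hs, idF M, mor_id M, fun i => Function.injective_id⟩
    · unfold Simp at hs
      push Not at hs
      obtain ⟨X, hX, f, hf, hf0, i, hi⟩ := hs hM hNZ
      let s := sesSub M (imSub f hf)
      have h1 : 0 < td (quotRep M (imSub f hf)) := by
        apply td_pos
        unfold Function.Surjective at hi
        push Not at hi
        obtain ⟨y, hy⟩ := hi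
        refine ⟨i, s.g i y, fun hz => ?_⟩
        obtain ⟨z, hz⟩ := (s.ex i y).1 hz
        obtain ⟨w, hw⟩ := z.2
        exact hy w (hw.trans hz)
      have h2 := s.td_eq
      obtain ⟨W, hW, g, hg, hgi⟩ := ih (td (subRep M (imSub f hf))) (by omega) _
        (inC_im hX hM f hf) (im_nz hf hf0) rfl
      exact ⟨W, hW, fcomp s.f g, s.mf.comp hg, fun i => (s.inj i).comp (hgi i)⟩

theorem Simp.schur [IsAlgClosed K] {W X : QuivRep K V A t h} (hW : Simp B S W) (hX : inC B S X)
    (f g : Fam W X) (hf : Mor f) (hg : Mor g) (hg0 : g ≠ 0)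
    (hr : ∀ i x, ∃ y, g i y = f i x) : ∃ c : K, ∀ i x, f i x = c • g i x := by
  have hgi := hW.inj hX g hg hg0
  let s := sesInj g hg hgi
  obtain ⟨φ, hφ, hφe⟩ := s.mor_liftL f hf (by
    intro i x
    exact (s.ex i _).2 (hr i x))
  obtain ⟨i, x, hx⟩ := hW.2.1
  haveI : Nontrivial (W.sp i) := ⟨x, 0, hx⟩
  obtain ⟨c, hc⟩ := Module.End.exists_eigenvalue (K := K) (V := W.sp i) (φ i)
  obtain ⟨v, hv⟩ := hc.exists_hasEigenvector
  refine ⟨c, fun k y => ?_⟩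
  by_contra hne
  have hm : Mor (f - c • g : Fam W X) := hf.sub (hg.smul c)
  have hinj := hW.inj hX (f - c • g) hm (by
    intro hz
    exact hne (sub_eq_zero.1 (fam_ap hz k y)))
  apply hv.2
  apply hinj i
  rw [map_zero]
  change f i v - c • g i v = 0
  have h1 : g i (φ i v) = f i v := hφe i v
  rw [← h1, hv.apply_eq_smul, map_smul, sub_self]

theorem homDim_one {X Y : QuivRep K V A t h} (g : Fam X Y) (hg : Mor g) (hg0 : g ≠ 0)
    (H : ∀ f : Fam X Y, Mor f → ∃ c : K, ∀ i x, f i x = c • g i x) : homDim X Y = 1 := by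
  refine finrank_eq_one_iff'.2 ⟨⟨g, (mem_homS_iff g).2 hg⟩, ?_, ?_⟩
  · intro hz
    exact hg0 (congrArg Subtype.val hz)
  · rintro ⟨w, hw⟩
    obtain ⟨c, hc⟩ := H w ((mem_homS_iff w).1 hw)
    refine ⟨c, Subtype.ext (fam_ext fun i x => ?_)⟩
    exact (hc i x).symm

theorem idF_ne {X : QuivRep K V A t h} (H : NZ X) : idF X ≠ 0 := by
  obtain ⟨i, x, hx⟩ := H
  exact fun hz => hx (fam_ap hz i x)

theorem Simp.homDim_self [IsAlgClosed K] {W : QuivRep K V A t h} (hW : Simp B S W) :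
    homDim W W = 1 :=
  homDim_one (idF W) (mor_id W) (idF_ne hW.2.1) fun f hf =>
    hW.schur hW.1 f (idF W) hf (mor_id W) (idF_ne hW.2.1) fun _ x => ⟨_, rfl⟩

theorem Simp.homZ {W W' : QuivRep K V A t h} (hW : Simp B S W) (hW' : Simp B S W')
    (hd : W.dimVec ≠ W'.dimVec) : HomZ W W' := by
  intro f hf
  by_contra h0
  apply hd
  funext i
  exact le_antisymm (LinearMap.finrank_le_finrank_of_injective (hW.inj hW'.1 f hf h0 i))
    (LinearMap.finrank_le_finrank_of_surjective (hW'.2.2 W hW.1 f hf h0 i))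

/-- candidates for the hull -/
def PreHull (B : QuivRep K V A t h) (S : Finset V) (W J : QuivRep K V A t h) : Prop :=
  inC B S J ∧ InjC B S J ∧ Pos B S J ∧ ∃ ι : Fam W J, Mor ι ∧ ι ≠ 0

def IsHull (B : QuivRep K V A t h) (S : Finset V) (W J : QuivRep K V A t h) : Prop :=
  PreHull B S W J ∧ ∀ J', PreHull B S W J' → td J ≤ td J'

theorem exists_hull (hQ : Acyclic t h) (hB1 : homDim B B = 1) (hB2 : ExtZ B B)
    (hBS : Van S B) {W : QuivRep K V A t h} (hW : inC B S W) (hNZ : NZ W) :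
    ∃ J, IsHull B S W J := by
  have hne : ∃ n, ∃ J, PreHull B S W J ∧ td J = n := by
    obtain ⟨j, x, hx⟩ := hNZ
    have hj : j ∉ S := fun hj => hx (hW.1 j hj x)
    obtain ⟨M, hM, hMB⟩ := approx hQ hB1 hB2 hBS hj
    exact ⟨_, M, ⟨⟨hM.van, hM.hom, hMB⟩, hM.inj, hM.pos, hM.nz W hW ⟨x, hx⟩⟩, rfl⟩
  classical
  obtain ⟨J, hJ, hJn⟩ := Nat.find_spec hne
  refine ⟨J, hJ, fun J' hJ' => ?_⟩
  rw [hJn]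
  exact Nat.find_min' hne ⟨J', hJ', rfl⟩

theorem InjC.quot {L M Q : QuivRep K V A t h} (s : SES L M Q) (H : InjC B S M) : InjC B S Q :=
  fun W hW => s.extZ_quot (H W hW)

theorem IsHull.im {W J N : QuivRep K V A t h} (hJ : IsHull B S W J) (hN : inC B S N)
    (g : Fam N J) (hg : Mor g) (hg0 : g ≠ 0) (ι : Fam W J) (hι : Mor ι) :
    ∀ i x, ∃ y, g i y = ι i x := by
  let s := sesSub J (imSub g hg)
  have hQ : inC B S (quotRep J (imSub g hg)) := inC_quot s (inC_im hN hJ.1.1 g hg) hJ.1.1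
  have h2 := s.td_eq
  have h3 := td_pos (im_nz hg hg0)
  have hz : fcomp s.g ι = 0 := by
    by_contra hz
    have := hJ.2 _ ⟨hQ, hJ.1.2.1.quot s, hJ.1.2.2.1.quot s.g s.mg s.surj, fcomp s.g ι,
      s.mg.comp hι, hz⟩
    omega
  intro i x
  obtain ⟨z, hz⟩ := (s.ex i (ι i x)).1 (fam_ap hz i x)
  obtain ⟨w, hw⟩ := z.2
  exact ⟨w, hw.trans hz⟩

theorem IsHull.dim_eq {W W' J : QuivRep K V A t h} (hW : Simp B S W) (hW' : Simp B S W')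
    (hJ : IsHull B S W J) (hn : ¬ HomZ W' J) : W'.dimVec = W.dimVec := by
  unfold HomZ at hn
  push Not at hn
  obtain ⟨f, hf, hf0⟩ := hn
  obtain ⟨ι, hι, hι0⟩ := hJ.1.2.2.2
  have hfi := hW'.inj hJ.1.1 f hf hf0
  let s := sesInj f hf hfi
  obtain ⟨u, hu, hue⟩ := s.mor_liftL ι hι (by
    intro i x
    exact (s.ex i _).2 (hJ.im hW'.1 f hf hf0 ι hι i x))
  by_contra hd
  have := hW.homZ hW' (Ne.symm hd) u hu
  apply hι0
  apply fam_zero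
  intro i x
  rw [← hue i x, this]
  exact map_zero _

theorem IsHull.homDim_one [IsAlgClosed K] {W J : QuivRep K V A t h} (hW : Simp B S W)
    (hJ : IsHull B S W J) : homDim W J = 1 := by
  obtain ⟨ι, hι, hι0⟩ := hJ.1.2.2.2
  exact QX.homDim_one ι hι hι0 fun f hf => hW.schur hJ.1.1 f ι hf hι hι0
    (hJ.im hW.1 ι hι hι0 f hf)

theorem IsHull.embed {W J M : QuivRep K V A t h} (hW : Simp B S W) (hJ : IsHull B S W J)
    (hM : inC B S M) (hMi : InjC B S M) (hn : ¬ HomZ W M) :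
    ∃ F : Fam J M, Mor F ∧ ∀ i, Function.Injective (F i) := by
  unfold HomZ at hn
  push Not at hn
  obtain ⟨f, hf, hf0⟩ := hn
  obtain ⟨ι, hι, hι0⟩ := hJ.1.2.2.2
  let s := sesInj ι hι (hW.inj hJ.1.1 ι hι hι0)
  obtain ⟨F, hF, hFe⟩ := s.mor_ext (hMi _ (inC_quot s hW.1 hJ.1.1)) f hf
  refine ⟨F, hF, fun i => ?_⟩
  rw [injective_iff_map_eq_zero]
  intro x hx
  by_contra hx0
  have h1 := hJ.im (inC_ker hJ.1.1 hM F hF) (sesKer F hF).f (sesKer F hF).mf (by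
    intro hz
    exact hx0 (fam_ap hz i ⟨x, Subtype.ext hx⟩)) ι hι
  apply hf0
  apply fam_zero
  intro k y
  obtain ⟨z, hz⟩ := h1 k y
  rw [← hFe]
  change F k (ι k y) = 0
  rw [← hz]
  exact congrArg Subtype.val ((sesKer F hF).gf k z)

theorem td_inj {X Y : QuivRep K V A t h} (f : Fam X Y) (hf : Mor f)
    (hi : ∀ i, Function.Injective (f i)) : td X ≤ td Y := by
  have := (sesInj f hf hi).td_eq
  omega

theorem IsHull.lt {W J W' J' : QuivRep K V A t h} (hW : Simp B S W) (hJ : IsHull B S W J)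
    (hW' : Simp B S W') (hJ' : IsHull B S W' J') (hn : ¬ ExtZ W W') : td J < td J' := by
  obtain ⟨ι, hι, hι0⟩ := hJ'.1.2.2.2
  let s := sesInj ι hι (hW'.inj hJ'.1.1 ι hι hι0)
  have hn' : ¬ HomZ W (quotRep J' (imSub ι hι)) := fun H => hn (s.extZ_ker H (hJ'.1.2.1 W hW.1))
  obtain ⟨F, hF, hFi⟩ := hJ.embed hW (inC_quot s hW'.1 hJ'.1.1) (hJ'.1.2.1.quot s) hn'
  have h1 := td_inj F hF hFi
  have h2 := s.td_eq
  have h3 := td_pos hW'.2.1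
  omega

theorem pr_hull_ne {W J W' : QuivRep K V A t h} (hW : Simp B S W) (hW' : Simp B S W')
    (hJ : IsHull B S W J) (hd : W'.dimVec ≠ W.dimVec) : pr (natQ W'.dimVec) J = 0 := by
  have h1 : HomZ W' J := by
    by_contra hn
    exact hd (hJ.dim_eq hW hW' hn)
  rw [pr_rep, homZ_iff.1 h1, extZ_iff.1 (hJ.1.2.1 W' hW'.1)]
  simp

theorem pr_hull_self [IsAlgClosed K] {W J : QuivRep K V A t h} (hW : Simp B S W)
    (hJ : IsHull B S W J) : pr (natQ W.dimVec) J = 1 := by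
  rw [pr_rep, hJ.homDim_one hW, extZ_iff.1 (hJ.1.2.1 W hW.1)]
  simp

theorem pr_inC {W : QuivRep K V A t h} (hW : inC B S W) : pr (natQ W.dimVec) B = 0 := by
  rw [pr_rep, homZ_iff.1 hW.2.1, extZ_iff.1 hW.2.2]
  simp

end QX

namespace QX
open QuivRep
variable {K : Type} [Field K] {V A : Type} [Fintype V] [DecidableEq V] [Fintype A] {t h : A → V}
variable {B : QuivRep K V A t h} {S : Finset V}

def Sig (B : QuivRep K V A t h) (S : Finset V) : Set (V → ℕ) :=
  {b | ∃ W, Simp B S W ∧ W.dimVec = b}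

theorem sig_sys (hQ : Acyclic t h) (hB1 : homDim B B = 1) (hB2 : ExtZ B B) (hBS : Van S B) :
    ∃ (W J : Sig B S → QuivRep K V A t h), ∀ b, Simp B S (W b) ∧ (W b).dimVec = b.1 ∧
      IsHull B S (W b) (J b) := by
  have : ∀ b : Sig B S, ∃ W J : QuivRep K V A t h, Simp B S W ∧ W.dimVec = b.1 ∧
      IsHull B S W J := by
    rintro ⟨b, W, hW, hb⟩
    obtain ⟨J, hJ⟩ := exists_hull hQ hB1 hB2 hBS hW.1 hW.2.1
    exact ⟨W, J, hW, hb, hJ⟩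
  choose W J H using this
  exact ⟨W, J, H⟩

theorem sig_delta [IsAlgClosed K] {W J : Sig B S → QuivRep K V A t h}
    (H : ∀ b, Simp B S (W b) ∧ (W b).dimVec = b.1 ∧ IsHull B S (W b) (J b)) (b b' : Sig B S) :
    pr (natQ b.1) (J b') = if b = b' then 1 else 0 := by
  split_ifs with hb
  · rw [hb, ← (H b').2.1]
    exact pr_hull_self (H b').1 (H b').2.2
  · rw [← (H b).2.1]
    refine pr_hull_ne (H b').1 (H b).1 (H b').2.2 ?_
    rw [(H b).2.1, (H b').2.1]
    exact fun he => hb (Subtype.ext he)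

theorem eulL_apply (z x : V → ℚ) : eulL t h z x = eulerForm t h x z := rfl

theorem pr_sum {ι : Type} (F : Finset ι) (c : ι → ℚ) (x : ι → V → ℚ) (M : QuivRep K V A t h) :
    pr (∑ b ∈ F, c b • x b) M = ∑ b ∈ F, c b * pr (x b) M := by
  unfold pr
  rw [← eulL_apply, map_sum]
  refine Finset.sum_congr rfl fun b _ => ?_
  rw [map_smul, smul_eq_mul, eulL_apply]

theorem pr_add (x y : V → ℚ) (M : QuivRep K V A t h) : pr (x + y) M = pr x M + pr y M :=
  euler_add_left x y _

theorem pr_smul (c : ℚ) (x : V → ℚ) (M : QuivRep K V A t h) : pr (c • x) M = c * pr x M :=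
  euler_smul_left c x _

theorem sig_card [IsAlgClosed K] (hQ : Acyclic t h) (hB1 : homDim B B = 1) (hB2 : ExtZ B B)
    (hBS : Van S B) (F : Finset (Sig B S)) : F.card + S.card + 1 ≤ Fintype.card V := by
  obtain ⟨W, J, H⟩ := sig_sys hQ hB1 hB2 hBS
  let L : ((F → ℚ) × (S → ℚ) × ℚ) →ₗ[ℚ] (V → ℚ) :=
    { toFun := fun p => (∑ b, p.1 b • natQ b.1.1) + (fun v => if hv : v ∈ S then p.2.1 ⟨v, hv⟩ else 0)
        + p.2.2 • natQ B.dimVec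
      map_add' := by
        intro p q
        funext v
        simp only [Prod.fst_add, Prod.snd_add, Pi.add_apply, add_smul, Finset.sum_add_distrib]
        split_ifs <;> ring
      map_smul' := by
        intro c p
        funext v
        simp only [Prod.smul_fst, Prod.smul_snd, Pi.smul_apply, smul_eq_mul, mul_smul,
          RingHom.id_apply, Pi.add_apply, Finset.sum_apply, mul_add, Finset.mul_sum]
        split_ifs <;> simp }
  have hinj : Function.Injective L := by
    rw [injective_iff_map_eq_zero]
    rintro ⟨c, d, e⟩ h0
    have h0' : (∑ b, c b • natQ b.1.1) + (fun v => if hv : v ∈ S then d ⟨v, hv⟩ else 0)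
        + e • natQ B.dimVec = 0 := h0
    have hbS : ∀ (b : Sig B S), ∀ v ∈ S, natQ b.1 v = 0 := by
      intro b v hv
      have := van_dim (H b).1.1.1 hv
      rw [(H b).2.1] at this
      simp [natQ, this]
    have hd : d = 0 := by
      funext ⟨v, hv⟩
      have h1 := congrFun h0' v
      simp only [Pi.add_apply, Finset.sum_apply, Pi.smul_apply, smul_eq_mul, hv, dite_true,
        Pi.zero_apply] at h1
      rw [Finset.sum_eq_zero (fun b _ => by rw [hbS b.1 v hv, mul_zero])] at h1
      rw [show natQ B.dimVec v = 0 by simp [natQ, van_dim hBS hv]] at h1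
      simpa using h1
    subst hd
    have h1 : (∑ b, c b • natQ b.1.1) + e • natQ B.dimVec = 0 := by
      rw [← h0']
      congr 1
      funext v
      simp
    have hBB : pr (natQ B.dimVec) B = 1 := by
      rw [pr_rep, hB1, extZ_iff.1 hB2]; simp
    have hbB : ∀ b : Sig B S, pr (natQ b.1) B = 0 := by
      intro b
      rw [← (H b).2.1]
      exact pr_inC (H b).1.1
    have hz : ∀ M : QuivRep K V A t h, pr (0 : V → ℚ) M = 0 := by
      intro M; simp [pr, eulerForm]
    have he : e = 0 := by
      have h2 := congrArg (fun x => pr x B) h1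
      simp only [pr_add, pr_sum, pr_smul, hBB, hbB, hz] at h2
      simpa using h2
    subst he
    have hc : c = 0 := by
      funext b
      have h2 := congrArg (fun x => pr x (J b.1)) h1
      simp only [pr_add, pr_sum, pr_smul, hz, sig_delta H] at h2
      rw [Finset.sum_eq_single b] at h2
      · simpa using h2
      · intro b' _ hb'
        rw [if_neg (fun he => hb' (Subtype.ext he)), mul_zero]
      · intro hb
        exact absurd (Finset.mem_univ b) hb
    subst hc
    rfl
  have := LinearMap.finrank_le_finrank_of_injective hinj
  simp only [Module.finrank_prod, Module.finrank_fintype_fun_eq_card, Module.finrank_self,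
    Fintype.card_coe] at this
  omega

theorem sig_finite [IsAlgClosed K] (hQ : Acyclic t h) (hB1 : homDim B B = 1) (hB2 : ExtZ B B)
    (hBS : Van S B) : Finite (Sig B S) := by
  by_contra hn
  rw [not_finite_iff_infinite] at hn
  obtain ⟨F, hF⟩ := Infinite.exists_subset_card_eq (Sig B S) (Fintype.card V)
  have := sig_card hQ hB1 hB2 hBS F
  omega

theorem pr_nNZ (x : V → ℚ) {M : QuivRep K V A t h} (H : ¬ NZ M) : pr x M = 0 := by
  rw [← td_zero_iff] at H
  unfold td at H
  rw [Finset.sum_eq_zero_iff] at H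
  unfold pr eulerForm natQ
  simp [H]

theorem pr_injC_zero [IsAlgClosed K] {W J : Sig B S → QuivRep K V A t h}
    (H : ∀ b, Simp B S (W b) ∧ (W b).dimVec = b.1 ∧ IsHull B S (W b) (J b)) (x : V → ℚ)
    (hx : ∀ b, pr x (J b) = 0) (n : ℕ) : ∀ M, inC B S M → InjC B S M → td M = n → pr x M = 0 := by
  induction n using Nat.strong_induction_on with
  | _ n ih =>
    intro M hM hMi hn
    by_cases hNZ : NZ M
    · obtain ⟨W', hW', f, hf, hfi⟩ := exists_simp _ M hM hNZ rfl
      let b : Sig B S := ⟨W'.dimVec, W', hW', rfl⟩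
      have h1 : ¬ HomZ W' M := by
        intro hz
        obtain ⟨i, y, hy⟩ := hW'.2.1
        apply hy
        apply hfi i
        rw [map_zero]
        exact fam_ap (hz f hf) i y
      have h2 : ¬ HomZ (W b) M := by
        intro hz
        apply h1
        rw [homZ_iff] at hz ⊢
        have e1 := pr_rep W' M
        have e2 := pr_rep (W b) M
        rw [(H b).2.1, hz, extZ_iff.1 (hMi _ (H b).1.1)] at e2
        rw [show natQ W'.dimVec = natQ b.1 from rfl, e2, extZ_iff.1 (hMi _ hW'.1)] at e1
        have : (homDim W' M : ℚ) = 0 := by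
          push_cast at e1
          linarith
        exact_mod_cast this
      obtain ⟨F, hF, hFi⟩ := (H b).2.2.embed (H b).1 hM hMi h2
      let s := sesInj F hF hFi
      have hNZJ : NZ (J b) := by
        obtain ⟨ι, hι, hι0⟩ := (H b).2.2.1.2.2.2
        obtain ⟨i, y, hy⟩ := fam_ne hι0
        exact ⟨i, _, hy⟩
      have h3 := td_pos hNZJ
      have h4 := s.td_eq
      rw [s.pr_eq, hx b, ih (td (quotRep M (imSub F hF))) (by omega) _
        (inC_quot s (H b).2.2.1.1 hM) (hMi.quot s) rfl, add_zero]
    · exact pr_nNZ x hNZ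

theorem sig_span [IsAlgClosed K] (hQ : Acyclic t h) (hB1 : homDim B B = 1) (hB2 : ExtZ B B)
    (hBS : Van S B) [Fintype (Sig B S)] (α : V → ℚ) (hα : inA B S α) :
    ∃ c : Sig B S → ℚ, (∀ b, 0 ≤ c b) ∧ α = ∑ b, c b • natQ b.1 := by
  obtain ⟨W, J, H⟩ := sig_sys hQ hB1 hB2 hBS
  refine ⟨fun b => pr α (J b), fun b => (H b).2.2.1.2.2.1.self hα, ?_⟩
  let δ : V → ℚ := α + (-1 : ℚ) • ∑ b : Sig B S, pr α (J b) • natQ b.1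
  have hδJ : ∀ b, pr δ (J b) = 0 := by
    intro b
    simp only [δ, pr_add, pr_sum, pr_smul, sig_delta H]
    simp
  have hδL : inL B S δ := by
    constructor
    · intro v hv
      simp only [δ, Pi.add_apply, Pi.smul_apply, Finset.sum_apply, smul_eq_mul]
      rw [hα.2.1 v hv, Finset.sum_eq_zero (fun b _ => ?_)]
      · simp
      · have := van_dim (H b).1.1.1 hv
        rw [(H b).2.1] at this
        simp [natQ, this]
    · simp only [δ, pr_add, pr_sum, pr_smul]
      rw [hα.2.2.1, Finset.sum_eq_zero (fun b _ => ?_)]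
      · simp
      · rw [← (H b).2.1, pr_inC (H b).1.1, mul_zero]
  have hδ : δ = 0 := by
    funext j
    by_cases hj : j ∈ S
    · exact hδL.1 j hj
    · obtain ⟨M, hM, hMB⟩ := approx hQ hB1 hB2 hBS hj
      rw [← hM.prx δ hδL]
      exact pr_injC_zero H δ hδJ _ M ⟨hM.van, hM.hom, hMB⟩ hM.inj rfl
  have : α = δ + ∑ b : Sig B S, pr α (J b) • natQ b.1 := by
    simp only [δ]
    rw [neg_one_smul, add_assoc, neg_add_cancel, add_zero]
  rw [hδ, zero_add] at this
  exact this

end QX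

namespace QX
open QuivRep
variable {K : Type} [Field K] {V A : Type} [Fintype V] [DecidableEq V] [Fintype A] {t h : A → V}

theorem max_fix (hQ : Acyclic t h) (α : V → ℚ) : ∃ α' n : V → ℚ, (∀ j, 0 ≤ α' j) ∧ (∀ j, 0 ≤ n j) ∧
    (∀ j, n j ≠ 0 → α' j = 0) ∧
    ∀ j, α' j - ∑ a : {a // h a = j}, α' (t a.1) =
      α j - ∑ a : {a // h a = j}, α (t a.1) + n j := by
  let σ : V → ℚ := fun j => α j - ∑ a : {a // h a = j}, α (t a.1)
  let α' : V → ℚ := (wf_fwd hQ).fix (fun j rec => max 0 (σ j + ∑ a : {a // h a = j},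
    rec (t a.1) ⟨a.1, rfl, a.2⟩))
  have hα' : ∀ j, α' j = max 0 (σ j + ∑ a : {a // h a = j}, α' (t a.1)) := by
    intro j
    exact WellFounded.fix_eq _ _ _
  refine ⟨α', fun j => max 0 (-(σ j + ∑ a : {a // h a = j}, α' (t a.1))), ?_, ?_, ?_, ?_⟩
  · intro j
    rw [hα']
    exact le_max_left _ _
  · intro j
    exact le_max_left _ _
  · intro j hj
    rw [hα']
    by_contra hne
    rcases le_total 0 (σ j + ∑ a : {a // h a = j}, α' (t a.1)) with h1 | h1
    · exact hj (max_eq_left (by linarith))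
    · exact hne (max_eq_left h1)
  · intro j
    change _ = σ j + max 0 (-(σ j + ∑ a : {a // h a = j}, α' (t a.1)))
    rw [hα' j]
    rcases le_total 0 (σ j + ∑ a : {a // h a = j}, α' (t a.1)) with h1 | h1
    · rw [max_eq_right h1, max_eq_left (by linarith)]
      ring
    · rw [max_eq_left h1, max_eq_right (by linarith)]
      ring

theorem exists_U (hQ : Acyclic t h) (B : QuivRep K V A t h) (T : V → Prop) :
    ∃ U : Sub B, (∀ i, ¬ T i → U.sub i = ⊥) ∧
      (∀ i, T i → Function.Injective (outPi (quotRep B U) i)) := by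
  classical
  let F : ∀ i, Submodule K (B.sp i) := (wf_bwd hQ).fix (C := fun i => Submodule K (B.sp i))
    (fun i rec => if T i then
      ⨅ a : {a // t a = i}, (rec (h a.1) ⟨a.1, rfl, a.2⟩).comap (outMap B i a.1 a.2) else ⊥)
  have hF : ∀ i, F i = if T i then
      ⨅ a : {a // t a = i}, (F (h a.1)).comap (outMap B i a.1 a.2) else ⊥ := by
    intro i
    exact WellFounded.fix_eq _ _ _
  let U : Sub B :=
    { sub := F
      le := by
        intro a x hx
        rw [hF] at hx
        split_ifs at hx with hT
        · rw [Submodule.mem_iInf] at hx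
          exact hx ⟨a, rfl⟩
        · rw [Submodule.mem_bot] at hx
          rw [hx, map_zero]
          exact Submodule.zero_mem _ }
  refine ⟨U, ?_, ?_⟩
  · intro i hi
    change F i = ⊥
    rw [hF, if_neg hi]
  · intro i hi
    rw [injective_iff_map_eq_zero]
    intro y hy
    let s := sesSub B U
    obtain ⟨x, rfl⟩ := s.surj i y
    refine (s.ex i x).2 ?_
    have hx : x ∈ F i := by
      rw [hF, if_pos hi, Submodule.mem_iInf]
      intro a
      have h1 := congrFun hy a
      have h2 : outMap (quotRep B U) i a.1 a.2 (s.g i x) = 0 := h1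
      rw [← outMap_mor s.mg] at h2
      obtain ⟨z, hz⟩ := (s.ex _ _).1 h2
      rw [Submodule.mem_comap, ← hz]
      exact z.2
    exact ⟨⟨x, hx⟩, rfl⟩

theorem reduce (hQ : Acyclic t h) (B : QuivRep K V A t h) (α : V → ℚ) (h0 : pr α B = 0)
    (hU : ∀ U : Sub B, eulerForm t h α (natQ U.dimVec) ≤ 0) :
    ∃ (S : Finset V) (α' n : V → ℚ), Van S B ∧ inA B S α' ∧ (∀ j, 0 ≤ n j) ∧
      α = α' + ∑ j ∈ S, n j • (-natQ (gammaRoot t h j)) := by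
  obtain ⟨α', n, hα', hn, hnz, heq⟩ := max_fix hQ α
  have hpr : ∀ y : V → ℚ, eulerForm t h α' y = eulerForm t h α y + ∑ j, n j * y j := by
    intro y
    rw [euler_in, euler_in, ← Finset.sum_add_distrib]
    refine Finset.sum_congr rfl fun j _ => ?_
    rw [heq]; ring
  obtain ⟨U, hU1, hU2⟩ := exists_U hQ B (fun i => α' i ≠ 0)
  let s := sesSub B U
  have e1 := s.pr_eq α
  have e2 : pr α (subRep B U) ≤ 0 := hU U
  have e3 : pr α' (quotRep B U) ≤ 0 := by
    unfold pr
    rw [euler_out]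
    refine Finset.sum_nonpos fun i _ => ?_
    by_cases hi : α' i = 0
    · rw [hi, zero_mul]
    · refine mul_nonpos_of_nonneg_of_nonpos (hα' i) ?_
      have h1 := out_inj_dim (hU2 i hi)
      have h2 : ((quotRep B U).dimVec i : ℚ) ≤
          ((∑ a : {a // t a = i}, (quotRep B U).dimVec (h a.1) : ℕ) : ℚ) := by
        exact_mod_cast h1
      push_cast at h2
      simp only [natQ]
      linarith
  have e4 : pr α' (quotRep B U) = pr α (quotRep B U) +
      ∑ j, n j * natQ (quotRep B U).dimVec j := hpr _
  have e5 : ∑ j, n j * natQ (quotRep B U).dimVec j = 0 := by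
    apply le_antisymm
    · linarith
    · exact Finset.sum_nonneg fun j _ => mul_nonneg (hn j) (by simp [natQ])
  rw [Finset.sum_eq_zero_iff_of_nonneg
    (fun j _ => mul_nonneg (hn j) (by simp [natQ]))] at e5
  have hB0 : ∀ j, n j ≠ 0 → B.dimVec j = 0 := by
    intro j hj
    rw [s.dim_eq j]
    have h1 : (subRep B U).dimVec j = 0 := by
      change Module.finrank K (U.sub j) = 0
      rw [hU1 j (not_not.2 (hnz j hj)), finrank_bot]
    have h2 := e5 j (Finset.mem_univ j)
    rcases mul_eq_zero.1 h2 with h3 | h3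
    · exact absurd h3 hj
    · have h4 : (quotRep B U).dimVec j = 0 := by
        simp only [natQ] at h3
        exact_mod_cast h3
      rw [h1, h4]
  have hsum : ∀ U' : Sub B, ∑ j, n j * natQ U'.dimVec j = 0 := by
    intro U'
    refine Finset.sum_eq_zero fun j _ => ?_
    by_cases hj : n j = 0
    · rw [hj, zero_mul]
    · have h1 := (sesSub B U').dim_eq j
      rw [hB0 j hj] at h1
      have h2 : U'.dimVec j = 0 := by
        change (subRep B U').dimVec j = 0
        omega
      simp [natQ, h2]
  have hsumB : ∑ j, n j * natQ B.dimVec j = 0 := by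
    refine Finset.sum_eq_zero fun j _ => ?_
    by_cases hj : n j = 0
    · rw [hj, zero_mul]
    · simp [natQ, hB0 j hj]
  refine ⟨Finset.univ.filter (fun j => n j ≠ 0), α', n, ?_, ⟨hα', ?_, ?_, ?_⟩, hn, ?_⟩
  · apply van_of_dim
    intro j hj
    exact hB0 j (Finset.mem_filter.1 hj).2
  · intro j hj
    exact hnz j (Finset.mem_filter.1 hj).2
  · have := hpr (natQ B.dimVec)
    unfold pr at h0 ⊢
    rw [this, h0, hsumB, add_zero]
  · intro U'
    rw [hpr, hsum U', add_zero]
    exact hU U'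
  · have hz : α' + (-1 : ℚ) • (α + ∑ j, n j • natQ (gammaRoot t h j)) = 0 := by
      apply euler_nondeg hQ
      intro y
      rw [euler_add_left, euler_smul_left, euler_add_left, hpr]
      have : eulerForm t h (∑ j, n j • natQ (gammaRoot t h j)) y = ∑ j, n j * y j := by
        rw [← eulL_apply, map_sum]
        refine Finset.sum_congr rfl fun b _ => ?_
        rw [map_smul, smul_eq_mul, eulL_apply, gamma_pr hQ]
      rw [this]; ring
    rw [Finset.sum_filter_of_ne (fun j _ hj => ?_)]
    · rw [neg_one_smul, ← sub_eq_add_neg, sub_eq_zero] at hz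
      rw [hz]
      simp
    · intro hj0
      rw [hj0, zero_smul] at hj
      exact hj rfl

end QX

namespace QX
open QuivRep
variable {K : Type} [Field K] {V A : Type} [Fintype V] [DecidableEq V] [Fintype A] {t h : A → V}

theorem cone_add {E : Finset (V → ℤ)} {x y : V → ℚ} (hx : x ∈ coneOf E) (hy : y ∈ coneOf E) :
    x + y ∈ coneOf E := by
  obtain ⟨l, hl, rfl⟩ := hx
  obtain ⟨m, hm, rfl⟩ := hy
  refine ⟨l + m, fun c => add_nonneg (hl c) (hm c), ?_⟩
  rw [← Finset.sum_add_distrib]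
  refine Finset.sum_congr rfl fun c _ => ?_
  rw [Pi.add_apply, add_smul]

theorem cone_zero (E : Finset (V → ℤ)) : (0 : V → ℚ) ∈ coneOf E :=
  ⟨0, fun c => le_refl _, by simp⟩

theorem cone_smul {E : Finset (V → ℤ)} {c : V → ℤ} (hc : c ∈ E) {r : ℚ} (hr : 0 ≤ r) :
    r • intQ c ∈ coneOf E := by
  classical
  refine ⟨fun d => if d = c then r else 0, fun d => ?_, ?_⟩
  · dsimp only
    split_ifs
    · exact hr
    · exact le_refl _
  · rw [Finset.sum_eq_single c]
    · simp
    · intro d _ hd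
      simp [hd]
    · intro hn
      exact absurd hc hn

theorem cone_sum {ι : Type} {E : Finset (V → ℤ)} (F : Finset ι) (x : ι → V → ℚ)
    (H : ∀ i ∈ F, x i ∈ coneOf E) : ∑ i ∈ F, x i ∈ coneOf E := by
  classical
  induction F using Finset.induction_on with
  | empty => simpa using cone_zero E
  | insert a F ha ih =>
    rw [Finset.sum_insert ha]
    exact cone_add (H a (Finset.mem_insert_self _ _))
      (ih fun i hi => H i (Finset.mem_insert_of_mem hi))

theorem dom_cone {β : V → ℕ} {E : Finset (V → ℤ)} (H : ∀ c ∈ E, intQ c ∈ Dom K t h β)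
    {x : V → ℚ} (hx : x ∈ coneOf E) : x ∈ Dom K t h β := by
  obtain ⟨l, hl, rfl⟩ := hx
  have e : ∀ z : V → ℚ, eulerForm t h (∑ c ∈ E, l c • intQ c) z =
      ∑ c ∈ E, l c * eulerForm t h (intQ c) z := by
    intro z
    rw [← eulL_apply, map_sum]
    refine Finset.sum_congr rfl fun b _ => ?_
    rw [map_smul, smul_eq_mul, eulL_apply]
  refine ⟨?_, fun β' hβ' => ?_⟩
  · rw [e]
    refine Finset.sum_eq_zero fun c hc => ?_
    rw [(H c hc).1, mul_zero]
  · rw [e]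
    exact Finset.sum_nonpos fun c hc =>
      mul_nonpos_of_nonneg_of_nonpos (hl c) ((H c hc).2 β' hβ')

theorem intQ_natZ (b : V → ℕ) : intQ (natZ b) = natQ b := by
  funext i; simp [intQ, natZ, natQ]

theorem dom_simple {B W : QuivRep K V A t h} (h1 : HomZ W B) (h2 : ExtZ W B) :
    natQ W.dimVec ∈ Dom K t h B.dimVec := by
  constructor
  · have := pr_rep W B
    rw [homZ_iff.1 h1, extZ_iff.1 h2] at this
    simpa [pr] using this
  · intro β' hβ'
    obtain ⟨U, hU⟩ := hβ' B rfl
    have := pr_rep W (subRep B U)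
    rw [homZ_iff.1 ((sesSub B U).homZ_sub h1)] at this
    rw [← hU]
    change pr (natQ W.dimVec) (subRep B U) ≤ 0
    rw [this]
    simp

theorem intQ_gamma (i : V) : intQ (fun v => -(gammaRoot t h i v : ℤ)) = -natQ (gammaRoot t h i) := by
  funext v; simp [intQ, natQ]

theorem dom_gamma (hQ : Acyclic t h) {β : V → ℕ} {i : V} (hi : β i = 0) :
    -natQ (gammaRoot t h i) ∈ Dom K t h β := by
  have e : ∀ z : V → ℚ, eulerForm t h (-natQ (gammaRoot t h i)) z = - z i := by
    intro z
    rw [← neg_one_smul ℚ, euler_smul_left, gamma_pr hQ]; ring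
  constructor
  · rw [e]; simp [natQ, hi]
  · intro β' _
    rw [e]; simp [natQ]

theorem exists_E [IsAlgClosed K] (hQ : Acyclic t h) {B : QuivRep K V A t h}
    (hB1 : homDim B B = 1) (hB2 : ExtZ B B) {S : Finset V} (hBS : Van S B) :
    ∃ E : Finset (V → ℤ), IsQExcSet K t h E ∧ E.card ≤ Fintype.card V - 1 ∧
      (∀ c ∈ E, intQ c ∈ Dom K t h B.dimVec) ∧
      ∀ α' n : V → ℚ, inA B S α' → (∀ j, 0 ≤ n j) →
        α' + ∑ j ∈ S, n j • (-natQ (gammaRoot t h j)) ∈ coneOf E := by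
  classical
  haveI := sig_finite hQ hB1 hB2 hBS
  haveI := Fintype.ofFinite (Sig B S)
  obtain ⟨W, J, H⟩ := sig_sys hQ hB1 hB2 hBS
  let N := Fintype.card (Sig B S)
  let e : Fin N ≃ Sig B S := (Fintype.equivFin (Sig B S)).symm
  let f : Fin N → ℤ := fun i => -(td (J (e i)) : ℤ)
  let σ := Tuple.sort f
  have hσ : Monotone (f ∘ σ) := Tuple.monotone_sort f
  let b' : Fin N → Sig B S := fun i => e (σ i)
  have hb' : Function.Bijective b' := e.bijective.comp σ.bijective
  let b : Fin N → V → ℕ := fun i => (b' i).1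
  let g : Fin S.card → V := fun k => (S.equivFin.symm k).1
  have hgS : ∀ k, g k ∈ S := fun k => (S.equivFin.symm k).2
  let G : V → V → ℤ := fun j v => -(gammaRoot t h j v : ℤ)
  let E : Finset (V → ℤ) := Finset.univ.image (fun j => natZ (b j)) ∪
    Finset.univ.image (fun k => G (g k))
  have hmem : ∀ c, c ∈ E ↔ (∃ j, natZ (b j) = c) ∨ ∃ k, G (g k) = c := by
    intro c
    simp [E]
  refine ⟨E, ⟨N, S.card, b, g, ?_, ?_, ⟨?_, ?_⟩, ?_, ?_⟩, ?_, ?_, ?_⟩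
  · exact Subtype.val_injective.comp hb'.1
  · exact Subtype.val_injective.comp S.equivFin.symm.injective
  · intro j
    refine ⟨W (b' j), (H (b' j)).2.1, ?_, (H (b' j)).1.homDim_self⟩
    change extDim _ _ = 0
    rw [← extZ_iff]
    by_contra hn
    exact lt_irrefl _ ((H (b' j)).2.2.lt (H (b' j)).1 (H (b' j)).1 (H (b' j)).2.2 hn)
  · intro i j hij
    have hne : b' i ≠ b' j := fun he => hij.ne (hb'.1 he)
    have hd : ∀ x y, x ≠ y → (W x).dimVec ≠ (W y).dimVec := by
      intro x y hxy he
      rw [(H x).2.1, (H y).2.1] at he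
      exact hxy (Subtype.ext he)
    have h1 : HomZ (W (b' i)) (W (b' j)) := (H _).1.homZ (H _).1 (hd _ _ hne)
    have h2 : HomZ (W (b' j)) (W (b' i)) := (H _).1.homZ (H _).1 (hd _ _ hne.symm)
    have h3 : ExtZ (W (b' i)) (W (b' j)) := by
      by_contra hn
      have h4 := (H (b' i)).2.2.lt (H _).1 (H _).1 (H (b' j)).2.2 hn
      have h5 : -(td (J (b' i)) : ℤ) ≤ -(td (J (b' j)) : ℤ) := hσ hij.le
      omega
    refine ⟨?_, ?_, ?_⟩
    · exact Nat.le_zero.1 (Nat.sInf_le ⟨_, _, (H (b' i)).2.1, (H (b' j)).2.1, homZ_iff.1 h1⟩)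
    · exact Nat.le_zero.1 (Nat.sInf_le ⟨_, _, (H (b' i)).2.1, (H (b' j)).2.1, extZ_iff.1 h3⟩)
    · have h4 := euler_eq (W (b' j)) (W (b' i))
      rw [homZ_iff.1 h2, (H (b' j)).2.1, (H (b' i)).2.1] at h4
      change eulerForm t h (natZ (b' j).1) (natZ (b' i).1) ≤ 0
      push_cast at h4
      linarith [Int.natCast_nonneg (extDim (W (b' j)) (W (b' i)))]
  · intro j k
    have := van_dim (H (b' j)).1.1.1 (hgS k)
    rwa [(H (b' j)).2.1] at this
  · ext c
    rw [Finset.mem_coe, hmem]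
    rfl
  · have h1 := sig_card hQ hB1 hB2 hBS (Finset.univ : Finset (Sig B S))
    have h2 : E.card ≤ N + S.card := by
      refine (Finset.card_union_le _ _).trans (add_le_add ?_ ?_)
      · exact Finset.card_image_le.trans (by simp)
      · exact Finset.card_image_le.trans (by simp)
    have h3 : (Finset.univ : Finset (Sig B S)).card = N := Finset.card_univ
    omega
  · intro c hc
    rcases (hmem c).1 hc with ⟨j, rfl⟩ | ⟨k, rfl⟩
    · rw [intQ_natZ]
      have := dom_simple (H (b' j)).1.1.2.1 (H (b' j)).1.1.2.2
      rwa [(H (b' j)).2.1] at this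
    · rw [show intQ (G (g k)) = _ from intQ_gamma (g k)]
      exact dom_gamma hQ (van_dim hBS (hgS k))
  · intro α' n hα' hn
    obtain ⟨c, hc, hce⟩ := sig_span hQ hB1 hB2 hBS α' hα'
    rw [hce]
    refine cone_add (cone_sum _ _ fun x _ => ?_) (cone_sum _ _ fun j hj => ?_)
    · obtain ⟨i, rfl⟩ := hb'.2 x
      rw [← intQ_natZ]
      exact cone_smul ((hmem _).2 (Or.inl ⟨i, rfl⟩)) (hc _)
    · rw [← intQ_gamma]
      refine cone_smul ((hmem _).2 (Or.inr ⟨S.equivFin ⟨j, hj⟩, ?_⟩)) (hn j)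
      simp [G, g]

theorem main [IsAlgClosed K] (hQ : Acyclic t h) (β : V → ℕ) (hβ : isRealSchurRoot K t h β) :
    ∃ (m : ℕ) (Es : Fin m → Finset (V → ℤ)),
      (∀ i, IsQExcSet K t h (Es i) ∧ (Es i).card ≤ Fintype.card V - 1) ∧
      Dom K t h β = {x | ∃ i, x ∈ coneOf (Es i)} := by
  classical
  obtain ⟨B, rfl, hB2, hB1⟩ := hβ
  have hB2' : ExtZ B B := extZ_iff.2 hB2
  have hB1' : homDim B B = 1 := hB1
  choose E hE1 hE2 hE3 hE4 using fun S : {S : Finset V // Van S B} =>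
    exists_E hQ hB1' hB2' S.2
  haveI := Fintype.ofFinite {S : Finset V // Van S B}
  let e := (Fintype.equivFin {S : Finset V // Van S B}).symm
  refine ⟨Fintype.card {S : Finset V // Van S B}, fun i => E (e i), fun i => ⟨hE1 _, hE2 _⟩, ?_⟩
  ext x
  constructor
  · rintro ⟨h0, h1⟩
    obtain ⟨S, α', n, hS, hα', hn, hx⟩ := reduce hQ B x h0
      (fun U => h1 _ (rigid_embeds hB2' U))
    refine ⟨e.symm ⟨S, hS⟩, ?_⟩
    dsimp only
    rw [Equiv.apply_symm_apply, hx]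
    exact hE4 ⟨S, hS⟩ α' n hα' hn
  · rintro ⟨i, hi⟩
    exact dom_cone (hE3 (e i)) hi

end QX

/-- For a real Schur root `β` there are finitely many quiver
exceptional sets `𝓔_1, …, 𝓔_m`, each of cardinality at most `|Q_0| − 1`, with
`D(β) = ⋃ᵢ Cone(𝓔_i)`. -/
theorem stmt13 [IsAlgClosed K] [CharZero K] (t h : A → V) (hQ : Acyclic t h)
    (β : V → ℕ) (hβ : isRealSchurRoot K t h β) :
    ∃ (m : ℕ) (Es : Fin m → Finset (V → ℤ)),
      (∀ i, IsQExcSet K t h (Es i) ∧ (Es i).card ≤ Fintype.card V - 1) ∧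
      Dom K t h β = {x | ∃ i, x ∈ coneOf (Es i)} := by
  exact QX.main hQ β hβ

end
end

section
/- Let β be a sincere dimension vector of Q and let α ∈ ℤ^{Q_0} satisfy ⟨α,β⟩ = 0 and ⟨α,β'⟩ ≤ 0 for every dimension vector β' with β' ↪ β (i.e., α ∈ D(β)). Then α(i) ≥ 0 for all i ∈ Q_0, i.e., α is itself a dimension vector. -/
set_option autoImplicit false

noncomputable section

open scoped BigOperators

/-! Basic setup for representations of a quiver with vertex set `V`, arrow set `A`,
tail map `t` and head map `h`, over a field `K`. -/

variable (K : Type) [Field K]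
variable {V A : Type} [Fintype V] [DecidableEq V] [Fintype A]

/-- One-step relation: there is an arrow from `j` to `k`. -/
def Stp (t h : A → V) (j k : V) : Prop := ∃ a, t a = j ∧ h a = k

lemma stp_path (t h : A → V) {i j : V} (H : Relation.TransGen (Stp t h) i j) :
    ∃ p, p ≠ [] ∧ IsPathFrom t h i p j := by
  induction H using Relation.TransGen.head_induction_on with
  | single H =>
    obtain ⟨a, h1, h2⟩ := H
    exact ⟨[a], by simp, h1, h2⟩
  | head H _ ih =>
    obtain ⟨a, h1, h2⟩ := H
    obtain ⟨p, _, hp⟩ := ih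
    exact ⟨a :: p, by simp, h1, by rw [h2]; exact hp⟩

lemma stp_irrefl (t h : A → V) (hQ : Acyclic t h) (i : V) :
    ¬ Relation.TransGen (Stp t h) i i := by
  intro H
  obtain ⟨p, h1, h2⟩ := stp_path t h H
  exact h1 (hQ i p h2)

lemma stp_wf (t h : A → V) (hQ : Acyclic t h) :
    WellFounded (Relation.TransGen (Stp t h)) := by
  haveI : Std.Irrefl (Relation.TransGen (Stp t h)) := ⟨stp_irrefl t h hQ⟩
  exact Finite.wellFounded_of_trans_of_irrefl _

lemma stp_wf' (t h : A → V) (hQ : Acyclic t h) :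
    WellFounded (fun k j => Stp t h j k) := by
  haveI : Std.Irrefl (Function.swap (Relation.TransGen (Stp t h))) := ⟨stp_irrefl t h hQ⟩
  haveI : IsTrans V (Function.swap (Relation.TransGen (Stp t h))) :=
    ⟨fun a b c h1 h2 => Relation.TransGen.trans h2 h1⟩
  exact Subrelation.wf (fun {k j} H => Relation.TransGen.single H)
    (Finite.wellFounded_of_trans_of_irrefl (Function.swap (Relation.TransGen (Stp t h))))

/-- The recursively defined dimension vector of the quotient. -/
lemma exists_m (t h : A → V) (hQ : Acyclic t h) (β : V → ℕ) (i : V) :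
    ∃ m : V → ℕ, ∀ j, m j = if j = i then β i else
      min (β j) (∑ a : {a // t a = j}, m (h a.1)) := by
  refine ⟨(stp_wf' t h hQ).fix (fun j m => if j = i then β i else
      min (β j) (∑ a : {a // t a = j}, m (h a.1) ⟨a.1, a.2, rfl⟩)), fun j => ?_⟩
  rw [WellFounded.fix_eq]

/-- The structure map viewed at a vertex equal to the tail. -/
def mapAt {K₀ : Type} [Field K₀] {t h : A → V} (X : QuivRep K₀ V A t h) (j : V) (a : A)
    (e : t a = j) : X.sp j →ₗ[K₀] X.sp (h a) := by
  subst e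
  exact X.map a

lemma exists_sub_le {E : Type} [AddCommGroup E] [Module K E] [FiniteDimensional K E]
    (W : Submodule K E) (n : ℕ) (hn : n ≤ Module.finrank K W) :
    ∃ U : Submodule K E, U ≤ W ∧ Module.finrank K U = n := by
  obtain ⟨v, hv⟩ := exists_linearIndependent_of_le_finrank hn
  have hv' : LinearIndependent K (fun k => (v k : E)) :=
    hv.map' W.subtype (Submodule.ker_subtype W)
  refine ⟨Submodule.span K (Set.range fun k => (v k : E)), ?_, ?_⟩
  · rw [Submodule.span_le]
    rintro _ ⟨k, rfl⟩
    exact (v k).2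
  · rw [finrank_span_eq_card hv', Fintype.card_fin]

lemma finrank_kernel {t h : A → V} (X : QuivRep K V A t h) (j : V)
    (U : ∀ a : {a // t a = j}, Submodule K (X.sp (h a.1))) (m : V → ℕ)
    (hU : ∀ a : {a // t a = j},
      Module.finrank K (X.sp (h a.1)) = Module.finrank K (U a) + m (h a.1)) :
    Module.finrank K (X.sp j) ≤
      Module.finrank K (⨅ a : {a // t a = j}, (U a).comap (mapAt X j a.1 a.2) : Submodule K (X.sp j))
        + ∑ a : {a // t a = j}, m (h a.1) := by
  let L : X.sp j →ₗ[K] (∀ a : {a // t a = j}, X.sp (h a.1) ⧸ U a) :=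
    LinearMap.pi fun a => (U a).mkQ.comp (mapAt X j a.1 a.2)
  have hk : LinearMap.ker L = ⨅ a : {a // t a = j}, (U a).comap (mapAt X j a.1 a.2) := by
    ext x
    simp [L, funext_iff, Submodule.Quotient.mk_eq_zero]
  rw [← hk, ← LinearMap.finrank_range_add_finrank_ker L, add_comm]
  gcongr
  refine (Submodule.finrank_le _).trans ?_
  rw [Module.finrank_pi_fintype]
  refine Finset.sum_le_sum fun a _ => ?_
  have := Submodule.finrank_quotient_add_finrank (U a)
  have := hU a
  omega

lemma embeds_m (t h : A → V) (hQ : Acyclic t h) (β : V → ℕ) (i : V) (m : V → ℕ)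
    (hm : ∀ j, m j = if j = i then β i else
      min (β j) (∑ a : {a // t a = j}, m (h a.1))) :
    Embeds K t h (fun j => β j - m j) β := by
  classical
  intro X hX
  have hX' : ∀ j, Module.finrank K (X.sp j) = β j := fun j => congrFun hX j
  have hmle : ∀ j, m j ≤ β j := by
    intro j
    rw [hm]
    split_ifs with e
    · rw [e]
    · exact min_le_left _ _
  let F : ∀ j, (∀ k, Stp t h j k → Submodule K (X.sp k)) → Submodule K (X.sp j) := fun j U =>
    let W : Submodule K (X.sp j) :=
      ⨅ a : {a // t a = j}, (U (h a.1) ⟨a.1, a.2, rfl⟩).comap (mapAt X j a.1 a.2)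
    if H : ∃ U' : Submodule K (X.sp j), U' ≤ W ∧ Module.finrank K U' = β j - m j
      then H.choose else ⊥
  let U : ∀ j, Submodule K (X.sp j) := (stp_wf' t h hQ).fix F
  have key : ∀ j, Module.finrank K (U j) = β j - m j ∧
      U j ≤ ⨅ a : {a // t a = j}, (U (h a.1)).comap (mapAt X j a.1 a.2) := by
    intro j
    induction j using (stp_wf' t h hQ).induction with
    | _ j ih =>
    have H : ∃ U' : Submodule K (X.sp j),
        U' ≤ (⨅ a : {a // t a = j}, (U (h a.1)).comap (mapAt X j a.1 a.2)) ∧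
        Module.finrank K U' = β j - m j := by
      apply exists_sub_le
      have := finrank_kernel K X j (fun a => U (h a.1)) m (fun a => by
        rw [(ih (h a.1) ⟨a.1, a.2, rfl⟩).1, hX']
        have := hmle (h a.1)
        omega)
      rw [hX' j] at this
      have h3 := hm j
      split_ifs at h3 with e
      · subst e; omega
      · omega
    have e : U j = H.choose := by
      have : U j = F j (fun k _ => U k) := WellFounded.fix_eq _ _ _
      rw [this]
      exact dif_pos H
    rw [e]
    exact ⟨H.choose_spec.2, H.choose_spec.1⟩
  refine ⟨⟨U, fun a x hx => ?_⟩, funext fun j => (key j).1⟩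
  have := (key (t a)).2 hx
  rw [Submodule.mem_iInf] at this
  exact this ⟨a, rfl⟩

lemma eulerForm_eq (t h : A → V) (x y : V → ℤ) :
    eulerForm t h x y = ∑ j, x j * (y j - ∑ a : {a // t a = j}, y (h a.1)) := by
  unfold eulerForm
  simp only [mul_sub, Finset.sum_sub_distrib]
  congr 1
  rw [← Finset.sum_fiberwise (s := Finset.univ) (g := t)]
  refine Finset.sum_congr rfl fun j _ => ?_
  rw [Finset.mul_sum, Finset.sum_subtype (p := fun a => t a = j) (Finset.univ.filter fun a => t a = j) (by simp)]
  refine Finset.sum_congr rfl fun a _ => ?_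
  rw [a.2]

/-- If `β` is sincere and `α ∈ D(β) ∩ ℤ^{Q_0}` then `α` is a dimension
vector. -/
theorem stmt19 [IsAlgClosed K] [CharZero K] (t h : A → V) (hQ : Acyclic t h)
    (β : V → ℕ) (hsinc : ∀ i, 0 < β i) (α : V → ℤ)
    (h1 : eulerForm t h α (natZ β) = 0)
    (h2 : ∀ β' : V → ℕ, Embeds K t h β' β → eulerForm t h α (natZ β') ≤ 0) :
    ∀ i, 0 ≤ α i := by
  classical
  intro i
  induction i using (stp_wf t h hQ).induction with
  | _ i ih =>
  obtain ⟨m, hm⟩ := exists_m t h hQ β i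
  have hmle : ∀ j, m j ≤ β j := by
    intro j
    rw [hm]
    split_ifs with e
    · rw [e]
    · exact min_le_left _ _
  have hpred : ∀ j, m j ≠ 0 → j = i ∨ Relation.TransGen (Stp t h) j i := by
    intro j
    induction j using (stp_wf' t h hQ).induction with
    | _ j ihj =>
    intro hj
    by_cases e : j = i
    · exact Or.inl e
    right
    have h3 := hm j
    rw [if_neg e] at h3
    have h4 : ∑ a : {a // t a = j}, m (h a.1) ≠ 0 := by omega
    obtain ⟨a, -, ha⟩ := Finset.exists_ne_zero_of_sum_ne_zero h4
    rcases ihj (h a.1) ⟨a.1, a.2, rfl⟩ ha with e' | e'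
    · exact Relation.TransGen.single ⟨a.1, a.2, e'⟩
    · exact Relation.TransGen.head ⟨a.1, a.2, rfl⟩ e'
  have hsucc : ∀ j, ¬ Relation.TransGen (Stp t h) j i →
      ∑ a : {a // t a = j}, m (h a.1) = 0 := by
    intro j hj
    refine Finset.sum_eq_zero fun a _ => ?_
    by_contra hne
    apply hj
    rcases hpred _ hne with e' | e'
    · exact Relation.TransGen.single ⟨a.1, a.2, e'⟩
    · exact Relation.TransGen.head ⟨a.1, a.2, rfl⟩ e'
  have h3 := h2 _ (embeds_m K t h hQ β i m hm)
  have h4 : eulerForm t h α (natZ m) ≥ 0 := by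
    have : eulerForm t h α (natZ fun j => β j - m j) =
        eulerForm t h α (natZ β) - eulerForm t h α (natZ m) := by
      unfold eulerForm natZ
      have : ∀ j, ((β j - m j : ℕ) : ℤ) = β j - m j := fun j => Nat.cast_sub (hmle j)
      simp only [this, mul_sub, Finset.sum_sub_distrib]
      ring
    linarith
  rw [eulerForm_eq] at h4
  rw [← Finset.add_sum_erase _ _ (Finset.mem_univ i)] at h4
  have h5 : ∑ j ∈ Finset.univ.erase i,
      α j * (natZ m j - ∑ a : {a // t a = j}, natZ m (h a.1)) ≤ 0 := by
    refine Finset.sum_nonpos fun j hj => ?_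
    have hji : j ≠ i := Finset.ne_of_mem_erase hj
    have h6 := hm j
    rw [if_neg hji] at h6
    by_cases hp : Relation.TransGen (Stp t h) j i
    · refine mul_nonpos_of_nonneg_of_nonpos (ih j hp) ?_
      have h7 : m j ≤ ∑ a : {a // t a = j}, m (h a.1) := by omega
      have h8 : (m j : ℤ) ≤ ∑ a : {a // t a = j}, (m (h a.1) : ℤ) := by exact_mod_cast h7
      simp only [natZ]
      linarith
    · have h7 := hsucc j hp
      have h8 : m j = 0 := by omega
      have h9 : ∑ a : {a // t a = j}, (m (h a.1) : ℤ) = 0 := by exact_mod_cast h7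
      simp only [natZ, h8, h9]
      simp
  have h6 : natZ m i - ∑ a : {a // t a = i}, natZ m (h a.1) = β i := by
    have h7 := hsucc i (stp_irrefl t h hQ i)
    have h9 : ∑ a : {a // t a = i}, (m (h a.1) : ℤ) = 0 := by exact_mod_cast h7
    have h8 := hm i
    rw [if_pos rfl] at h8
    simp only [natZ, h8, h9]
    simp
  rw [h6] at h4
  have h7 : 0 ≤ α i * (β i : ℤ) := by linarith
  have h8 : (0 : ℤ) < β i := by exact_mod_cast hsinc i
  exact nonneg_of_mul_nonneg_left h7 h8

end
end
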